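/- Let φ : [0,∞) → [0,∞) be an Orlicz function (convex, φ(0)=0, φ>0 on (0,∞)), and let w be a non-increasing positive function on I=(0,a), 0<a≤∞, with W(t)=∫₀ᵗ w dm finite on I. Let f be a measurable function on I belonging to L₁+M_W (i.e. f = u + h a.e. with ∫_I |u| dm < ∞ and sup_{x∈I}(1/W(x))∫₀ˣ h* dm < ∞), so that the Halperin level function f⁰ of f with respect to w is finite. Then inf{ ∫_I φ(g*/w)·w dm : g measurable on I with locally integrable g* and f ≺ g } = ∫_I φ(f⁰/w)·w dm, the equality understood in [0,∞]; that is, the modular Q(f) equals M(f⁰). -/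

import Mathlib

open MeasureTheory Set Filter
open scoped ENNReal

/-- The interval `(0, a)` for `a : ℝ≥0∞` (equals `(0,∞)` when `a = ∞`). -/
def Iset (a : ℝ≥0∞) : Set ℝ := {x : ℝ | 0 < x ∧ ENNReal.ofReal x < a}

/-- Lebesgue measure restricted to the interval `(0,a)`. -/
noncomputable def volI (a : ℝ≥0∞) : Measure ℝ := volume.restrict (Iset a)

/-- Decreasing rearrangement of an `ℝ≥0∞`-valued function with respect to a measure `μ`:
`f^{*,μ}(t) = inf {s > 0 : μ({f > s}) ≤ t}`. -/
noncomputable def rearrE (μ : Measure ℝ) (f : ℝ → ℝ≥0∞) (t : ℝ) : ℝ≥0∞ :=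
  sInf {s : ℝ≥0∞ | 0 < s ∧ μ {x | s < f x} ≤ ENNReal.ofReal t}

/-- Decreasing rearrangement of a real function with respect to a measure `μ` on `ℝ`:
`f^{*,μ}(t) = inf {s > 0 : μ({|f| > s}) ≤ t}`. -/
noncomputable def rearr (μ : Measure ℝ) (f : ℝ → ℝ) (t : ℝ) : ℝ≥0∞ :=
  rearrE μ (fun x => ENNReal.ofReal |f x|) t

/-- The measure `w·dm` on the set `I`. -/
noncomputable def wMeas (I : Set ℝ) (w : ℝ → ℝ) : Measure ℝ :=
  (volume.restrict I).withDensity (fun t => ENNReal.ofReal (w t))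

/-- `W(t) = ∫₀ᵗ w dm`. -/
noncomputable def Wfun (w : ℝ → ℝ) (t : ℝ) : ℝ := ∫ s in Set.Ioo (0:ℝ) t, w s

/-- `b = ∫_I w dm` as an extended real number. -/
noncomputable def bval (a : ℝ≥0∞) (w : ℝ → ℝ) : ℝ≥0∞ := ∫⁻ x in Iset a, ENNReal.ofReal (w x)

open scoped Classical

/-- Halperin's ratio `R(α,β) = (∫_α^β g dm)/(∫_α^β w dm)` for finite `β`. -/
noncomputable def Rq (w : ℝ → ℝ) (g : ℝ → ℝ≥0∞) (α β : ℝ) : ℝ≥0∞ :=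
  (∫⁻ t in Set.Ioo α β, g t) / (∫⁻ t in Set.Ioo α β, ENNReal.ofReal (w t))

/-- Halperin's ratio `R(α,β)` for `β ∈ (0,∞]`, with `R(α,∞) = limsup_{t→∞} R(α,t)`. -/
noncomputable def RR (w : ℝ → ℝ) (g : ℝ → ℝ≥0∞) (α : ℝ) (β : ℝ≥0∞) : ℝ≥0∞ :=
  if β = ∞ then Filter.limsup (fun t => Rq w g α t) Filter.atTop else Rq w g α β.toReal

/-- `(α,β) ⊆ (0,a)` is a level interval of `g` with respect to `w`:
`0 < R(α,β)` and `R(α,t) ≤ R(α,β)` for all `t ∈ (α,β)`. -/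
def IsLevelInterval (a : ℝ≥0∞) (w : ℝ → ℝ) (g : ℝ → ℝ≥0∞) (α : ℝ) (β : ℝ≥0∞) : Prop :=
  0 ≤ α ∧ ENNReal.ofReal α < β ∧ β ≤ a ∧ 0 < RR w g α β ∧
    ∀ t : ℝ, α < t → ENNReal.ofReal t < β → Rq w g α t ≤ RR w g α β

/-- A maximal level interval: a level interval contained in no strictly larger one. -/
def IsMaxLevelInterval (a : ℝ≥0∞) (w : ℝ → ℝ) (g : ℝ → ℝ≥0∞) (α : ℝ) (β : ℝ≥0∞) : Prop :=
  IsLevelInterval a w g α β ∧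
    ∀ α' β', IsLevelInterval a w g α' β' → α' ≤ α → β ≤ β' → α' = α ∧ β' = β

/-- Halperin's level function of (the non-negative, decreasing) `g` with respect to `w`:
equal to `R(α,β)·w(t)` on each maximal level interval `(α,β)` and to `g(t)` elsewhere. -/
noncomputable def levelFun (a : ℝ≥0∞) (w : ℝ → ℝ) (g : ℝ → ℝ≥0∞) (t : ℝ) : ℝ≥0∞ :=
  if h : ∃ α β, IsMaxLevelInterval a w g α β ∧ α < t ∧ ENNReal.ofReal t < β then
    RR w g h.choose h.choose_spec.choose * ENNReal.ofReal (w t)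
  else g t

/-- The Marcinkiewicz norm `‖h‖_{M_W} = sup_{x∈I} (1/W(x)) ∫₀ˣ h* dm`. -/
noncomputable def MWnorm (a : ℝ≥0∞) (w h : ℝ → ℝ) : ℝ≥0∞ :=
  ⨆ x ∈ Iset a,
    (∫⁻ t in Set.Ioo 0 x, rearr (volI a) h t) / (∫⁻ t in Set.Ioo 0 x, ENNReal.ofReal (w t))

/-- Extension of an Orlicz function `φ` to `[0,∞]`. -/
noncomputable def phiE (φ : ℝ → ℝ) (x : ℝ≥0∞) : ℝ≥0∞ :=
  if x = ∞ then ∞ else ENNReal.ofReal (φ x.toReal)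

namespace HL
open scoped Topology


lemma measurableSet_Iset (a : ℝ≥0∞) : MeasurableSet (Iset a) := by
  have : Iset a = Ioi (0:ℝ) ∩ ENNReal.ofReal ⁻¹' (Iio a) := by
    ext x; simp [Iset]
  rw [this]
  exact measurableSet_Ioi.inter (ENNReal.measurable_ofReal measurableSet_Iio)

lemma Iset_ofReal (x : ℝ) : Iset (ENNReal.ofReal x) = Ioo 0 x := by
  ext y; simp only [Iset, mem_ofPred_eq, mem_Ioo]
  constructor
  · rintro ⟨h1, h2⟩; exact ⟨h1, (ENNReal.ofReal_lt_ofReal_iff_of_nonneg h1.le).1 h2⟩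
  · rintro ⟨h1, h2⟩; exact ⟨h1, (ENNReal.ofReal_lt_ofReal_iff_of_nonneg h1.le).2 h2⟩

lemma Iset_top : Iset ∞ = Ioi 0 := by
  ext y; simp [Iset]

lemma Iset_mono {a b : ℝ≥0∞} (h : a ≤ b) : Iset a ⊆ Iset b := fun _ hx => ⟨hx.1, hx.2.trans_le h⟩

lemma volume_Iset (a : ℝ≥0∞) : volume (Iset a) = a := by
  by_cases h : a = ∞
  · subst h; rw [Iset_top]; simp
  · lift a to NNReal using h
    have := Iset_ofReal (a:ℝ)
    rw [ENNReal.ofReal_coe_nnreal] at this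
    rw [this]; simp

lemma rearr_antitone (μ : Measure ℝ) (f : ℝ → ℝ) : Antitone (rearr μ f) := by
  intro s t hst
  unfold rearr rearrE
  apply sInf_le_sInf
  rintro x ⟨h1, h2⟩
  exact ⟨h1, h2.trans (ENNReal.ofReal_le_ofReal hst)⟩

lemma lt_meas_of_lt_rearr {μ : Measure ℝ} {f : ℝ → ℝ} {t : ℝ} {s : ℝ≥0∞} (hs : 0 < s)
    (h : s < rearr μ f t) : ENNReal.ofReal t < μ {x | s < ENNReal.ofReal |f x|} := by
  by_contra hc
  exact absurd (sInf_le (show s ∈ {s : ℝ≥0∞ | 0 < s ∧ μ {x | s < ENNReal.ofReal |f x|} ≤ ENNReal.ofReal t} from ⟨hs, not_lt.1 hc⟩))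
    (not_le.2 h)

lemma rearr_le_of {μ : Measure ℝ} {f : ℝ → ℝ} {t : ℝ} {s : ℝ≥0∞}
    (h : ∀ s', s < s' → μ {x | s' < ENNReal.ofReal |f x|} ≤ ENNReal.ofReal t) :
    rearr μ f t ≤ s := by
  refine le_of_forall_gt fun c hc => ?_
  obtain ⟨d, hd1, hd2⟩ := exists_between hc
  exact (sInf_le (show d ∈ {s : ℝ≥0∞ | 0 < s ∧ μ {x | s < ENNReal.ofReal |f x|} ≤ ENNReal.ofReal t} from ⟨(zero_le).trans_lt hd1, h d hd1⟩)).trans_lt hd2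

lemma rearr_eq_zero {a : ℝ≥0∞} {f : ℝ → ℝ} {t : ℝ} (ht : a ≤ ENNReal.ofReal t) :
    rearr (volI a) f t = 0 := by
  refine le_antisymm (rearr_le_of fun s' _ => ?_) (zero_le)
  refine (measure_mono (subset_univ _)).trans ?_
  rw [volI, Measure.restrict_apply_univ, volume_Iset]; exact ht

/-- subadditivity -/
lemma rearr_add_le {μ : Measure ℝ} {f u h : ℝ → ℝ} (hf : ∀ᵐ x ∂μ, f x = u x + h x) {t : ℝ} (ht : 0 ≤ t) :
    rearr μ f (2 * t) ≤ rearr μ u t + rearr μ h t := by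
  unfold rearr rearrE
  rw [ENNReal.sInf_add]
  refine le_iInf₂ fun s1 hs1 => ?_
  rw [add_comm, ENNReal.sInf_add]
  refine le_iInf₂ fun s2 hs2 => ?_
  refine sInf_le ⟨add_pos_of_pos_of_nonneg hs2.1 (zero_le), ?_⟩
  have : μ {x | s2 + s1 < ENNReal.ofReal |f x|} ≤ μ ({x | s1 < ENNReal.ofReal |u x|} ∪ {x | s2 < ENNReal.ofReal |h x|}) := by
    refine measure_mono_ae ?_
    filter_upwards [hf] with x hx hx2
    by_contra hc
    have hc' : ¬ (s1 < ENNReal.ofReal |u x| ∨ s2 < ENNReal.ofReal |h x|) := hc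
    push Not at hc'
    have hx2' : s2 + s1 < ENNReal.ofReal |f x| := hx2
    refine absurd hx2' (not_lt.2 ?_)
    rw [hx]
    calc ENNReal.ofReal |u x + h x| ≤ ENNReal.ofReal (|h x| + |u x|) :=
          ENNReal.ofReal_le_ofReal (by rw [add_comm]; exact abs_add_le _ _)
      _ = ENNReal.ofReal |h x| + ENNReal.ofReal |u x| := ENNReal.ofReal_add (abs_nonneg _) (abs_nonneg _)
      _ ≤ _ := add_le_add hc'.2 hc'.1
  refine this.trans ((measure_union_le _ _).trans ?_)
  refine (add_le_add hs1.2 hs2.2).trans ?_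
  rw [← ENNReal.ofReal_add ht ht, two_mul]

/-- `∫ u* ≤ ∫ |u|`. -/
lemma lintegral_rearr_le {μ : Measure ℝ} (u : ℝ → ℝ) (hu : Measurable u) :
    ∫⁻ t in Ioi 0, rearr μ u t ≤ ∫⁻ x, ENNReal.ofReal |u x| ∂μ := by
  set N : ℝ → ℝ≥0∞ := fun s => μ {x | ENNReal.ofReal s < ENNReal.ofReal |u x|} with hN
  have hNanti : Antitone N := by
    intro s s' hss
    exact measure_mono fun x hx => (ENNReal.ofReal_le_ofReal hss).trans_lt hx
  have hS : MeasurableSet {p : ℝ × ℝ | ENNReal.ofReal p.1 < N p.2} :=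
    measurableSet_lt (ENNReal.measurable_ofReal.comp measurable_fst) (hNanti.measurable.comp measurable_snd)
  have h1 : ∀ t, rearr μ u t ≤ ∫⁻ s in Ioi 0, {p : ℝ × ℝ | ENNReal.ofReal p.1 < N p.2}.indicator 1 (t, s) := by
    intro t
    have e : ∀ s, {p : ℝ × ℝ | ENNReal.ofReal p.1 < N p.2}.indicator (1 : ℝ × ℝ → ℝ≥0∞) (t, s) = {s | ENNReal.ofReal t < N s}.indicator 1 s := by
      intro s; rfl
    simp_rw [e]
    have hm : MeasurableSet {s | ENNReal.ofReal t < N s} := measurableSet_lt measurable_const hNanti.measurable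
    rw [lintegral_indicator_one hm, Measure.restrict_apply hm]
    conv_lhs => rw [← volume_Iset (rearr μ u t)]
    refine measure_mono fun s hs => ⟨?_, hs.1⟩
    exact lt_meas_of_lt_rearr (ENNReal.ofReal_pos.2 hs.1) hs.2
  calc ∫⁻ t in Ioi 0, rearr μ u t ≤ ∫⁻ t in Ioi (0:ℝ), ∫⁻ s in Ioi (0:ℝ), {p : ℝ × ℝ | ENNReal.ofReal p.1 < N p.2}.indicator 1 (t, s) :=
        lintegral_mono h1
    _ = ∫⁻ s in Ioi (0:ℝ), ∫⁻ t in Ioi (0:ℝ), {p : ℝ × ℝ | ENNReal.ofReal p.1 < N p.2}.indicator 1 (t, s) :=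
        lintegral_lintegral_swap ((measurable_one.indicator hS).aemeasurable)
    _ = ∫⁻ s in Ioi (0:ℝ), N s := by
        refine lintegral_congr fun s => ?_
        have e : ∀ t, {p : ℝ × ℝ | ENNReal.ofReal p.1 < N p.2}.indicator (1 : ℝ × ℝ → ℝ≥0∞) (t, s) = {t | ENNReal.ofReal t < N s}.indicator 1 t := by
          intro s; rfl
        simp_rw [e]
        have hm : MeasurableSet {t | ENNReal.ofReal t < N s} := measurableSet_lt ENNReal.measurable_ofReal measurable_const
        rw [lintegral_indicator_one hm, Measure.restrict_apply hm]
        conv_rhs => rw [← volume_Iset (N s)]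
        congr 1; ext t; simp [Iset, and_comm]
    _ = ∫⁻ x, ENNReal.ofReal |u x| ∂μ := by
        rw [lintegral_eq_lintegral_meas_lt μ (Eventually.of_forall fun x => abs_nonneg (u x)) hu.abs.aemeasurable]
        refine setLIntegral_congr_fun measurableSet_Ioi fun s hs => ?_
        simp only [hN]
        congr 1; ext x
        simp only [mem_ofPred_eq]
        exact ENNReal.ofReal_lt_ofReal_iff_of_nonneg (le_of_lt hs)

end HL

namespace HL
open scoped Topology


/-- the primitive -/
noncomputable def II (v : ℝ → ℝ≥0∞) (β : ℝ≥0∞) : ℝ≥0∞ := ∫⁻ s in Iset β, v s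

noncomputable def wE (w : ℝ → ℝ) : ℝ → ℝ≥0∞ := fun s => ENNReal.ofReal (w s)

structure Ctx (a : ℝ≥0∞) (w : ℝ → ℝ) (v : ℝ → ℝ≥0∞) : Prop where
  ha : 0 < a
  wpos : ∀ x ∈ Iset a, 0 < w x
  wanti : AntitoneOn w (Iset a)
  wmeas : Measurable w
  wfin : ∀ t ∈ Iset a, II (wE w) (ENNReal.ofReal t) ≠ ∞
  vanti : Antitone v
  vb : ∃ K M : ℝ≥0∞, K ≠ ∞ ∧ M ≠ ∞ ∧ ∀ β, β ≤ a → II v β ≤ K + M * II (wE w) β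

lemma II_mono (v : ℝ → ℝ≥0∞) : Monotone (II v) := fun _ _ h => lintegral_mono_set (Iset_mono h)

lemma II_ofReal (v : ℝ → ℝ≥0∞) (x : ℝ) : II v (ENNReal.ofReal x) = ∫⁻ s in Ioo 0 x, v s := by
  rw [II, Iset_ofReal]

lemma II_add {v : ℝ → ℝ≥0∞} {α β : ℝ} (h0 : 0 ≤ α) (h : α ≤ β) :
    II v (ENNReal.ofReal β) = II v (ENNReal.ofReal α) + ∫⁻ s in Ioo α β, v s := by
  rw [II_ofReal, II_ofReal]
  have : ∫⁻ s in Ioo 0 α, v s = ∫⁻ s in Ioc 0 α, v s := setLIntegral_congr Ioo_ae_eq_Ioc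
  rw [this, ← lintegral_union measurableSet_Ioo]
  · rcases h.eq_or_lt with rfl | h
    · simpa using this
    · rw [Ioc_union_Ioo_eq_Ioo h0 h]
  · rw [Set.disjoint_left]; intro x hx hx2; exact absurd hx.2 (not_le.2 hx2.1)

lemma II_cont {v : ℝ → ℝ≥0∞} (hv : Measurable v) {e : ℝ≥0∞} (he : II v e ≠ ∞) :
    ContinuousOn (fun β => (II v β).toReal) (Iic e) := by
  have hae : ∀ᵐ s ∂(volume.restrict (Iset e)), v s < ∞ := ae_lt_top hv he
  have key : ∀ β ∈ Iic e, (II v β).toReal = ∫ s in Iset e, (Iset β).indicator (fun s => (v s).toReal) s := by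
    intro β hβ
    rw [integral_indicator (measurableSet_Iset β), Measure.restrict_restrict (measurableSet_Iset β),
      inter_eq_left.2 (Iset_mono hβ), integral_toReal hv.aemeasurable]
    · rfl
    · exact ae_restrict_of_ae_restrict_of_subset (Iset_mono hβ) hae
  refine ContinuousOn.congr ?_ key
  intro β hβ
  refine MeasureTheory.continuousWithinAt_of_dominated (bound := fun s => (v s).toReal) ?_ ?_ ?_ ?_
  · exact Eventually.of_forall fun β => (hv.ennreal_toReal.indicator (measurableSet_Iset β)).aestronglyMeasurable
  · refine Eventually.of_forall fun β => Eventually.of_forall fun s => ?_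
    by_cases hs : s ∈ Iset β
    · simp [hs]
    · simp [hs]
  · exact integrable_toReal_of_lintegral_ne_top hv.aemeasurable he
  · have hne : ∀ᵐ s ∂(volume.restrict (Iset e)), s ≠ β.toReal :=
      ae_restrict_of_ae (Measure.ae_ne volume _)
    filter_upwards [hne, ae_restrict_mem (measurableSet_Iset e)] with s hs hse
    apply ContinuousAt.continuousWithinAt
    have hs' : ENNReal.ofReal s ≠ β := by
      rintro rfl
      rw [ENNReal.toReal_ofReal hse.1.le] at hs; exact hs rfl
    rcases hs'.lt_or_gt with h | h
    · have : (fun x => (Iset x).indicator (fun s => (v s).toReal) s) =ᶠ[𝓝 β] fun _ => (v s).toReal := by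
        filter_upwards [lt_mem_nhds h] with x hx
        rw [indicator_of_mem]; exact ⟨hse.1, hx⟩
      exact continuousAt_const.congr this.symm
    · have : (fun x => (Iset x).indicator (fun s => (v s).toReal) s) =ᶠ[𝓝 β] fun _ => 0 := by
        filter_upwards [gt_mem_nhds h] with x hx
        rw [indicator_of_notMem]; exact fun h' => absurd h'.2 (not_lt.2 hx.le)
      exact continuousAt_const.congr this.symm

/-- admissible endpoints -/
def EE (a : ℝ≥0∞) (w : ℝ → ℝ) : Set ℝ≥0∞ := {β | β ≤ a ∧ II (wE w) β ≠ ∞}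

noncomputable def AA (v : ℝ → ℝ≥0∞) (β : ℝ≥0∞) : ℝ := (II v β).toReal

/-- slope -/
noncomputable def sl (w : ℝ → ℝ) (v : ℝ → ℝ≥0∞) (α β : ℝ≥0∞) : ℝ :=
  (AA v β - AA v α) / (AA (wE w) β - AA (wE w) α)

variable {a : ℝ≥0∞} {w : ℝ → ℝ} {v : ℝ → ℝ≥0∞}

lemma EE_lower {α β : ℝ≥0∞} (hβ : β ∈ EE a w) (h : α ≤ β) : α ∈ EE a w :=
  ⟨h.trans hβ.1, ne_top_of_le_ne_top hβ.2 (II_mono _ h)⟩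

lemma Ctx.wEmeas (C : Ctx a w v) : Measurable (wE w) := C.wmeas.ennreal_ofReal

lemma Ctx.EE_of_lt (C : Ctx a w v) {β : ℝ≥0∞} (h : β < a) : β ∈ EE a w := by
  refine ⟨h.le, ?_⟩
  obtain ⟨d, hd1, hd2⟩ := exists_between h
  have hdt : d ≠ ∞ := hd2.ne_top
  have hd0 : d ≠ 0 := (zero_le.trans_lt hd1).ne'
  have := C.wfin d.toReal ⟨ENNReal.toReal_pos hd0 hdt, by rwa [ENNReal.ofReal_toReal hdt]⟩
  rw [ENNReal.ofReal_toReal hdt] at this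
  exact ne_top_of_le_ne_top this (II_mono _ hd1.le)

/-- Bad endpoints only at infinity. -/
lemma Ctx.not_EE (C : Ctx a w v) {β : ℝ≥0∞} (hβ : β ≤ a) (h : β ∉ EE a w) : β = ∞ ∧ a = ∞ ∧ II (wE w) ∞ = ∞ := by
  have hβa : β = a := by
    by_contra hne
    exact h (C.EE_of_lt (lt_of_le_of_ne hβ hne))
  subst hβa
  have hI : II (wE w) β = ∞ := by
    by_contra hne; exact h ⟨le_rfl, hne⟩
  have : β = ∞ := by
    by_contra hne
    have ht := C.ha
    have hr : 0 < β.toReal := ENNReal.toReal_pos ht.ne' hne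
    have hmid : β.toReal / 2 ∈ Iset β := by
      refine ⟨by positivity, ?_⟩
      conv_rhs => rw [← ENNReal.ofReal_toReal hne]
      rw [ENNReal.ofReal_lt_ofReal_iff hr]; linarith
    have h1 := C.wfin _ hmid
    have h2 := II_add (v := wE w) (α := β.toReal / 2) (β := β.toReal) (by positivity) (by linarith)
    rw [ENNReal.ofReal_toReal hne, hI] at h2
    have h3 : ∫⁻ s in Ioo (β.toReal / 2) β.toReal, wE w s ≤ ∫⁻ s in Ioo (β.toReal / 2) β.toReal, ENNReal.ofReal (w (β.toReal/2)) := by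
      refine setLIntegral_mono measurable_const fun s hs => ?_
      refine ENNReal.ofReal_le_ofReal (C.wanti hmid ⟨hmid.1.trans hs.1, ?_⟩ hs.1.le)
      conv_rhs => rw [← ENNReal.ofReal_toReal hne]
      rw [ENNReal.ofReal_lt_ofReal_iff hr]; exact hs.2
    have h4 : ∫⁻ s in Ioo (β.toReal / 2) β.toReal, wE w s ≠ ∞ := by
      refine ne_top_of_le_ne_top ?_ h3
      simp [ENNReal.mul_eq_top]
    exact (ENNReal.add_ne_top.2 ⟨h1, h4⟩) h2.symm
  exact ⟨this, this, this ▸ hI⟩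

lemma Ctx.vfin (C : Ctx a w v) {β : ℝ≥0∞} (h : β ∈ EE a w) : II v β ≠ ∞ := by
  obtain ⟨K, M, hK, hM, H⟩ := C.vb
  exact ne_top_of_le_ne_top (ENNReal.add_ne_top.2 ⟨hK, ENNReal.mul_ne_top hM h.2⟩) (H β h.1)

lemma Ctx.contA (C : Ctx a w v) {e : ℝ≥0∞} (he : e ∈ EE a w) : ContinuousOn (AA v) (Iic e) :=
  II_cont C.vanti.measurable (C.vfin he)

lemma Ctx.contB (C : Ctx a w v) {e : ℝ≥0∞} (he : e ∈ EE a w) : ContinuousOn (AA (wE w)) (Iic e) :=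
  II_cont C.wEmeas he.2

lemma Ctx.monoA (C : Ctx a w v) {x y : ℝ≥0∞} (hy : y ∈ EE a w) (h : x ≤ y) : AA v x ≤ AA v y :=
  ENNReal.toReal_mono (C.vfin hy) (II_mono _ h)

lemma Ctx.int_pos (C : Ctx a w v) {α β : ℝ} (h0 : 0 ≤ α) (h : α < β) (hβ : ENNReal.ofReal β ≤ a) :
    0 < ∫⁻ s in Ioo α β, wE w s := by
  rw [setLIntegral_pos_iff C.wEmeas]
  have : Ioo α β ⊆ Function.support (wE w) ∩ Ioo α β := by
    intro s hs
    refine ⟨?_, hs⟩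
    have : 0 < w s := C.wpos s ⟨h0.trans_lt hs.1, lt_of_lt_of_le ?_ hβ⟩
    · simp [wE, this]
    · exact (ENNReal.ofReal_lt_ofReal_iff (h0.trans_lt h)).2 hs.2
  refine lt_of_lt_of_le ?_ (measure_mono this)
  simp [h]

lemma Ctx.strictB (C : Ctx a w v) {x y : ℝ≥0∞} (hy : y ∈ EE a w) (h : x < y) : AA (wE w) x < AA (wE w) y := by
  obtain ⟨d, hd1, hd2⟩ := exists_between h
  have hx : x ≠ ∞ := hd1.ne_top
  have hd : d ≠ ∞ := hd2.ne_top
  refine (ENNReal.toReal_lt_toReal (EE_lower hy h.le).2 hy.2).2 ?_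
  refine lt_of_lt_of_le ?_ (II_mono _ hd2.le)
  have h2 := II_add (v := wE w) (α := x.toReal) (β := d.toReal) ENNReal.toReal_nonneg (ENNReal.toReal_mono hd hd1.le)
  rw [ENNReal.ofReal_toReal hx, ENNReal.ofReal_toReal hd] at h2
  rw [h2]
  refine ENNReal.lt_add_right (EE_lower hy h.le).2 (C.int_pos ENNReal.toReal_nonneg ((ENNReal.toReal_lt_toReal hx hd).2 hd1) ?_).ne'
  rw [ENNReal.ofReal_toReal hd]; exact hd2.le.trans hy.1

lemma Ctx.med (C : Ctx a w v) {x y z : ℝ≥0∞} (hz : z ∈ EE a w) (hxy : x < y) (hyz : y < z) :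
    (sl w v x z ≤ sl w v y z ↔ sl w v x y ≤ sl w v x z) := by
  have h1 := C.strictB (EE_lower hz hyz.le) hxy
  have h2 := C.strictB hz hyz
  unfold sl
  rw [div_le_div_iff₀ (by linarith) (by linarith), div_le_div_iff₀ (by linarith) (by linarith)]
  constructor <;> intro h <;> nlinarith

lemma Ctx.contsl (C : Ctx a w v) {e : ℝ≥0∞} (he : e ∈ EE a w) :
    ContinuousOn (fun p : ℝ≥0∞ × ℝ≥0∞ => sl w v p.1 p.2) {p | p.1 < p.2 ∧ p.2 ≤ e} := by
  have m1 : MapsTo (fun p : ℝ≥0∞ × ℝ≥0∞ => p.1) {p | p.1 < p.2 ∧ p.2 ≤ e} (Iic e) := fun p hp => hp.1.le.trans hp.2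
  have m2 : MapsTo (fun p : ℝ≥0∞ × ℝ≥0∞ => p.2) {p | p.1 < p.2 ∧ p.2 ≤ e} (Iic e) := fun p hp => hp.2
  unfold sl
  refine ContinuousOn.div ?_ ?_ ?_
  · exact ((C.contA he).comp continuousOn_snd m2).sub ((C.contA he).comp continuousOn_fst m1)
  · exact ((C.contB he).comp continuousOn_snd m2).sub ((C.contB he).comp continuousOn_fst m1)
  · intro p hp
    have := C.strictB (EE_lower he hp.2) hp.1
    linarith

lemma Ctx.M1 (C : Ctx a w v) {α β₁ β₂ : ℝ≥0∞} (h1 : α < β₁) (h2 : β₁ < β₂) (hE : β₂ ∈ EE a w) {c : ℝ}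
    (hc : ∀ s, α < s → s ≤ β₁ → sl w v α s ≤ c) (hc2 : c ≤ sl w v α β₂) :
    ∃ β', β₁ < β' ∧ β' ≤ β₂ ∧ c ≤ sl w v α β' ∧ ∀ s, α < s → s < β' → sl w v α s ≤ sl w v α β' := by
  have hcont : ContinuousOn (fun β => sl w v α β) (Icc β₁ β₂) :=
    (C.contsl hE).comp (f := fun β => (α, β)) (by fun_prop) fun β hβ => ⟨h1.trans_le hβ.1, hβ.2⟩
  obtain ⟨m, hm, hmax⟩ := isCompact_Icc.exists_isMaxOn ⟨β₁, left_mem_Icc.2 h2.le⟩ hcont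
  have hmax' : ∀ s, β₁ ≤ s → s ≤ β₂ → sl w v α s ≤ sl w v α m := fun s h h' => hmax ⟨h, h'⟩
  rcases hm.1.eq_or_lt with rfl | hm1
  · have e : sl w v α β₂ = c := le_antisymm ((hmax' _ h2.le le_rfl).trans (hc _ h1 le_rfl)) hc2
    refine ⟨β₂, h2, le_rfl, hc2, fun s hs1 hs2 => ?_⟩
    rw [e]
    rcases le_total s β₁ with h | h
    · exact hc s hs1 h
    · exact (hmax' s h hs2.le).trans (hc _ h1 le_rfl)
  · have hcm : c ≤ sl w v α m := hc2.trans (hmax' _ h2.le le_rfl)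
    refine ⟨m, hm1, hm.2, hcm, fun s hs1 hs2 => ?_⟩
    rcases le_total s β₁ with h | h
    · exact (hc s hs1 h).trans hcm
    · exact hmax' s h (hs2.le.trans hm.2)

lemma Ctx.M2 (C : Ctx a w v) {α₂ α₁ β : ℝ≥0∞} (h1 : α₂ < α₁) (h2 : α₁ < β) (hE : β ∈ EE a w) {c : ℝ}
    (hc : ∀ s, α₁ ≤ s → s < β → c ≤ sl w v s β) (hc2 : sl w v α₂ β ≤ c) :
    ∃ α', α₂ ≤ α' ∧ α' < α₁ ∧ sl w v α' β ≤ c ∧ ∀ s, α' < s → s < β → sl w v α' s ≤ sl w v α' β := by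
  suffices H : ∃ α', α₂ ≤ α' ∧ α' < α₁ ∧ sl w v α' β ≤ c ∧ ∀ s, α' < s → s < β → sl w v α' β ≤ sl w v s β by
    obtain ⟨α', a1, a2, a3, a4⟩ := H
    exact ⟨α', a1, a2, a3, fun s hs1 hs2 => (C.med hE hs1 hs2).1 (a4 s hs1 hs2)⟩
  have hcont : ContinuousOn (fun α => sl w v α β) (Icc α₂ α₁) :=
    (C.contsl hE).comp (f := fun α => (α, β)) (by fun_prop) fun α hα => ⟨hα.2.trans_lt h2, le_rfl⟩
  obtain ⟨m, hm, hmin⟩ := isCompact_Icc.exists_isMinOn ⟨α₁, right_mem_Icc.2 h1.le⟩ hcont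
  have hmin' : ∀ s, α₂ ≤ s → s ≤ α₁ → sl w v m β ≤ sl w v s β := fun s h h' => hmin ⟨h, h'⟩
  rcases hm.2.eq_or_lt with rfl | hm1
  · refine ⟨α₂, le_rfl, h1, hc2, fun s hs1 hs2 => ?_⟩
    rcases le_total s m with h | h
    · exact hc2.trans ((hc _ le_rfl h2).trans (hmin' s hs1.le h))
    · exact hc2.trans (hc s h hs2)
  · have hcm : sl w v m β ≤ c := (hmin' _ le_rfl h1.le).trans hc2
    refine ⟨m, hm.1, hm1, hcm, fun s hs1 hs2 => ?_⟩
    rcases le_total s α₁ with h | h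
    · exact hmin' s (hm.1.trans hs1.le) h
    · exact hcm.trans (hc s h hs2)

end HL

namespace HL
open scoped Topology

variable {a : ℝ≥0∞} {w : ℝ → ℝ} {v : ℝ → ℝ≥0∞}

lemma Ctx.sl_nonneg (C : Ctx a w v) {x y : ℝ≥0∞} (hy : y ∈ EE a w) (h : x < y) : 0 ≤ sl w v x y :=
  div_nonneg (sub_nonneg.2 (C.monoA hy h.le)) (sub_nonneg.2 (C.strictB hy h).le)

lemma int_eq {u : ℝ → ℝ≥0∞} {α β : ℝ} (h0 : 0 ≤ α) (h : α ≤ β) (hf : II u (ENNReal.ofReal β) ≠ ∞) :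
    ∫⁻ s in Ioo α β, u s = ENNReal.ofReal (AA u (ENNReal.ofReal β) - AA u (ENNReal.ofReal α)) := by
  have h1 := II_add (v := u) h0 h
  have h2 : II u (ENNReal.ofReal α) ≠ ∞ := ne_top_of_le_ne_top hf (II_mono _ (ENNReal.ofReal_le_ofReal h))
  have h3 : ∫⁻ s in Ioo α β, u s ≠ ∞ := by
    intro h4; rw [h4] at h1; simp at h1; exact hf h1
  unfold AA
  rw [h1, ENNReal.toReal_add h2 h3, add_sub_cancel_left, ENNReal.ofReal_toReal h3]

lemma Ctx.Rq_eq (C : Ctx a w v) {α β : ℝ} (h0 : 0 ≤ α) (h : α < β) (hE : ENNReal.ofReal β ∈ EE a w) :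
    Rq w v α β = ENNReal.ofReal (sl w v (ENNReal.ofReal α) (ENNReal.ofReal β)) := by
  have hlt : ENNReal.ofReal α < ENNReal.ofReal β := (ENNReal.ofReal_lt_ofReal_iff (h0.trans_lt h)).2 h
  unfold Rq sl
  rw [int_eq h0 h.le (C.vfin hE)]
  have := int_eq (u := wE w) h0 h.le hE.2
  unfold wE at this ⊢
  rw [this, ENNReal.ofReal_div_of_pos]
  exact sub_pos.2 (C.strictB hE hlt)

lemma Ctx.RR_eq (C : Ctx a w v) {α : ℝ} {β : ℝ≥0∞} (h0 : 0 ≤ α) (h : ENNReal.ofReal α < β) (hE : β ∈ EE a w) :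
    RR w v α β = ENNReal.ofReal (sl w v (ENNReal.ofReal α) β) := by
  unfold RR
  split_ifs with hβ
  · subst hβ
    apply Tendsto.limsup_eq
    have hc := (C.contsl hE) (ENNReal.ofReal α, ∞) ⟨h, le_rfl⟩
    have ht : Tendsto (fun t : ℝ => (ENNReal.ofReal α, ENNReal.ofReal t)) atTop
        (𝓝[{p | p.1 < p.2 ∧ p.2 ≤ ∞}] (ENNReal.ofReal α, ∞)) := by
      refine tendsto_nhdsWithin_iff.2 ⟨?_, ?_⟩
      · exact tendsto_const_nhds.prodMk_nhds ENNReal.tendsto_ofReal_atTop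
      · filter_upwards [eventually_gt_atTop α] with t ht
        exact ⟨(ENNReal.ofReal_lt_ofReal_iff (h0.trans_lt ht)).2 ht, le_top⟩
    have h3 := (ENNReal.continuous_ofReal.tendsto _).comp (hc.tendsto.comp ht)
    refine h3.congr' ?_
    filter_upwards [eventually_gt_atTop α] with t ht
    simp only [Function.comp]
    rw [C.Rq_eq h0 ht (EE_lower hE le_top)]
  · have e : β = ENNReal.ofReal β.toReal := (ENNReal.ofReal_toReal hβ).symm
    have : α < β.toReal := (ENNReal.ofReal_lt_iff_lt_toReal h0 hβ).1 h
    rw [C.Rq_eq h0 this (by rwa [← e]), ← e]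

lemma Ctx.Rq_RR {α β : ℝ} (h : 0 ≤ β) : RR w v α (ENNReal.ofReal β) = Rq w v α β := by
  unfold RR; rw [if_neg ENNReal.ofReal_ne_top, ENNReal.toReal_ofReal h]

/-- real level intervals -/
lemma Ctx.level_of (C : Ctx a w v) {α β : ℝ≥0∞} (h : α < β) (hE : β ∈ EE a w) (hp : 0 < sl w v α β)
    (hs : ∀ s, α < s → s < β → sl w v α s ≤ sl w v α β) : IsLevelInterval a w v α.toReal β := by
  have hα : α ≠ ∞ := h.ne_top
  have e : ENNReal.ofReal α.toReal = α := ENNReal.ofReal_toReal hα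
  refine ⟨ENNReal.toReal_nonneg, by rwa [e], hE.1, ?_, ?_⟩
  · rw [C.RR_eq ENNReal.toReal_nonneg (by rwa [e]) hE, e]; exact ENNReal.ofReal_pos.2 hp
  · intro t ht1 ht2
    rw [C.RR_eq ENNReal.toReal_nonneg (by rwa [e]) hE, C.Rq_eq ENNReal.toReal_nonneg ht1 (EE_lower hE ht2.le), e]
    refine ENNReal.ofReal_le_ofReal (hs _ ?_ ht2)
    rw [← e]; exact (ENNReal.ofReal_lt_ofReal_iff (ENNReal.toReal_nonneg.trans_lt ht1)).2 ht1

lemma Ctx.level_sl (C : Ctx a w v) {α : ℝ} {β : ℝ≥0∞} (hl : IsLevelInterval a w v α β) (hE : β ∈ EE a w) :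
    0 < sl w v (ENNReal.ofReal α) β ∧ ∀ s, ENNReal.ofReal α < s → s < β → sl w v (ENNReal.ofReal α) s ≤ sl w v (ENNReal.ofReal α) β := by
  obtain ⟨h0, h1, h2, h3, h4⟩ := hl
  rw [C.RR_eq h0 h1 hE] at h3
  refine ⟨ENNReal.ofReal_pos.1 h3, fun s hs1 hs2 => ?_⟩
  have hst : s ≠ ∞ := hs2.ne_top
  have e : ENNReal.ofReal s.toReal = s := ENNReal.ofReal_toReal hst
  have := h4 s.toReal ((ENNReal.ofReal_lt_iff_lt_toReal h0 hst).1 hs1) (by rwa [e])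
  rw [C.RR_eq h0 h1 hE, C.Rq_eq h0 ((ENNReal.ofReal_lt_iff_lt_toReal h0 hst).1 hs1) (by rw [e]; exact EE_lower hE hs2.le), e] at this
  exact (ENNReal.ofReal_le_ofReal_iff (ENNReal.ofReal_pos.1 h3).le).1 this

lemma II_iSup (u : ℝ → ℝ≥0∞) : II u ∞ = ⨆ n : ℕ, II u (ENNReal.ofReal n) := by
  have : Iset ∞ = ⋃ n : ℕ, Iset (ENNReal.ofReal n) := by
    rw [Iset_top]; ext x
    simp only [Iset_ofReal, mem_iUnion, mem_Ioo, mem_Ioi]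
    constructor
    · intro h; obtain ⟨n, hn⟩ := exists_nat_gt x; exact ⟨n, h, hn⟩
    · rintro ⟨n, h, -⟩; exact h
  unfold II
  rw [this, setLIntegral_iUnion_of_directed]
  refine Monotone.directed_le fun m n h => Iset_mono (ENNReal.ofReal_le_ofReal (by exact_mod_cast h))

lemma Ctx.Btend (C : Ctx a w v) (ha : a = ∞) (hI : II (wE w) ∞ = ∞) :
    Tendsto (fun t : ℝ => AA (wE w) (ENNReal.ofReal t)) atTop atTop := by
  subst ha
  rw [tendsto_atTop]
  intro M
  rw [II_iSup] at hI
  have : ENNReal.ofReal M < ⨆ n : ℕ, II (wE w) (ENNReal.ofReal n) := by rw [hI]; exact ENNReal.ofReal_lt_top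
  obtain ⟨n, hn⟩ := lt_iSup_iff.1 this
  filter_upwards [eventually_ge_atTop (n:ℝ)] with t ht
  have h2 := hn.trans_le (II_mono (wE w) (ENNReal.ofReal_le_ofReal ht))
  have h3 : II (wE w) (ENNReal.ofReal t) ≠ ∞ := (C.EE_of_lt ENNReal.ofReal_lt_top).2
  exact (ENNReal.ofReal_le_iff_le_toReal h3).1 h2.le

/-- at a bad end the limsup ratio does not depend on the left endpoint -/
lemma Ctx.RR_bad_le (C : Ctx a w v) (ha : a = ∞) (hI : II (wE w) ∞ = ∞) {α α' : ℝ} (h0 : 0 ≤ α) (h0' : 0 ≤ α') :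
    RR w v α ∞ ≤ RR w v α' ∞ := by
  have hB := C.Btend ha hI
  by_contra hc
  obtain ⟨c, hc1, hc2⟩ := ENNReal.lt_iff_exists_nnreal_btwn.1 (not_le.1 hc)
  obtain ⟨c', hc1', hc2'⟩ := ENNReal.lt_iff_exists_nnreal_btwn.1 hc2
  have hcc : (c:ℝ) < c' := by exact_mod_cast hc1'
  unfold RR at hc1 hc2'
  rw [if_pos rfl] at hc1 hc2'
  have e1 := eventually_lt_of_limsup_lt hc1
  have e2 := frequently_lt_of_lt_limsup (by isBoundedDefault) hc2'
  have e3 := hB.eventually_gt_atTop ((c' * AA (wE w) (ENNReal.ofReal α) + AA v (ENNReal.ofReal α')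
    - c * AA (wE w) (ENNReal.ofReal α') - AA v (ENNReal.ofReal α)) / (c' - c))
  obtain ⟨t, ht2, ht1, ht3, ht4, ht5⟩ := (e2.and_eventually (e1.and (e3.and
    ((eventually_gt_atTop α).and (eventually_gt_atTop α'))))).exists
  have hE : ENNReal.ofReal t ∈ EE a w := C.EE_of_lt (by rw [ha]; exact ENNReal.ofReal_lt_top)
  rw [C.Rq_eq h0' ht5 hE, ← ENNReal.ofReal_coe_nnreal] at ht1
  rw [C.Rq_eq h0 ht4 hE, ← ENNReal.ofReal_coe_nnreal] at ht2
  have ht1 := (ENNReal.ofReal_lt_ofReal_iff_of_nonneg (C.sl_nonneg hE ((ENNReal.ofReal_lt_ofReal_iff (h0'.trans_lt ht5)).2 ht5))).1 ht1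
  have ht2 := (ENNReal.ofReal_lt_ofReal_iff_of_nonneg c'.coe_nonneg).1 ht2
  have s1 := C.strictB hE ((ENNReal.ofReal_lt_ofReal_iff (h0'.trans_lt ht5)).2 ht5)
  have s2 := C.strictB hE ((ENNReal.ofReal_lt_ofReal_iff (h0.trans_lt ht4)).2 ht4)
  unfold sl at ht1 ht2
  rw [div_lt_iff₀ (by linarith)] at ht1
  rw [lt_div_iff₀ (by linarith)] at ht2
  rw [div_lt_iff₀ (by linarith)] at ht3
  nlinarith

lemma Ctx.RR_bad (C : Ctx a w v) (ha : a = ∞) (hI : II (wE w) ∞ = ∞) {α α' : ℝ} (h0 : 0 ≤ α) (h0' : 0 ≤ α') :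
    RR w v α ∞ = RR w v α' ∞ := le_antisymm (C.RR_bad_le ha hI h0 h0') (C.RR_bad_le ha hI h0' h0)

/-- extending a maximal interval to the right strictly decreases the ratio -/
lemma Ctx.max_right (C : Ctx a w v) {α : ℝ} {β β' : ℝ≥0∞} (hm : IsMaxLevelInterval a w v α β) (hβ : β < β')
    (hβ' : β' ≤ a) : RR w v α β' < RR w v α β := by
  obtain ⟨hl, hmax⟩ := hm
  have h0 := hl.1
  have hαβ := hl.2.1
  have hE : β ∈ EE a w := C.EE_of_lt (hβ.trans_le hβ')
  obtain ⟨hp, hsl⟩ := C.level_sl hl hE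
  have key : ∀ γ, β < γ → γ ∈ EE a w → RR w v α γ < RR w v α β := by
    intro γ hγ hγE
    by_contra hc
    rw [not_lt, C.RR_eq h0 hαβ hE, C.RR_eq h0 (hαβ.trans hγ) hγE,
      ENNReal.ofReal_le_ofReal_iff (C.sl_nonneg hγE (hαβ.trans hγ))] at hc
    obtain ⟨γ', h1, h2, h3, h4⟩ := C.M1 hαβ hγ hγE (c := sl w v (ENNReal.ofReal α) β)
      (fun s hs1 hs2 => by
        rcases hs2.eq_or_lt with rfl | hs2
        · exact le_rfl
        · exact hsl s hs1 hs2) hc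
    have hlev := C.level_of (hαβ.trans h1) (EE_lower hγE h2) (hp.trans_le h3) h4
    rw [ENNReal.toReal_ofReal h0] at hlev
    exact h1.ne' (hmax _ _ hlev le_rfl h1.le).2
  by_cases hE' : β' ∈ EE a w
  · exact key _ hβ hE'
  · obtain ⟨rfl, ha, hI⟩ := C.not_EE hβ' hE'
    by_contra hc
    rw [not_lt] at hc
    have hlev : IsLevelInterval a w v α ∞ := by
      refine ⟨h0, ENNReal.ofReal_lt_top, hβ', hl.2.2.2.1.trans_le hc, fun t ht1 ht2 => ?_⟩
      refine le_trans ?_ hc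
      rcases lt_trichotomy (ENNReal.ofReal t) β with h | h | h
      · exact hl.2.2.2.2 t ht1 h
      · rw [← Ctx.Rq_RR (h0.trans ht1.le), h]
      · rw [← Ctx.Rq_RR (h0.trans ht1.le)]
        exact (key _ h (C.EE_of_lt (by rw [ha]; exact ENNReal.ofReal_lt_top))).le
    exact hβ.ne' (hmax _ _ hlev le_rfl hβ.le).2

lemma Ctx.max_left (C : Ctx a w v) {α α' : ℝ} {β : ℝ≥0∞} (hm : IsMaxLevelInterval a w v α β) (hα : 0 ≤ α')
    (hα' : ENNReal.ofReal α' < β) : RR w v α β ≤ RR w v α' β := by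
  obtain ⟨hl, hmax⟩ := hm
  have h0 := hl.1
  have hαβ := hl.2.1
  by_cases hE : β ∈ EE a w
  · obtain ⟨hp, hsl⟩ := C.level_sl hl hE
    rw [C.RR_eq h0 hαβ hE, C.RR_eq hα hα' hE]
    apply ENNReal.ofReal_le_ofReal
    have hr : ∀ s, ENNReal.ofReal α ≤ s → s < β → sl w v (ENNReal.ofReal α) β ≤ sl w v s β := by
      intro s hs1 hs2
      rcases hs1.eq_or_lt with rfl | hs1
      · exact le_rfl
      · exact (C.med hE hs1 hs2).2 (hsl s hs1 hs2)
    rcases le_or_gt (ENNReal.ofReal α) (ENNReal.ofReal α') with h | h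
    · exact hr _ h hα'
    · by_contra hc
      obtain ⟨γ, h1, h2, h3, h4⟩ := C.M2 h hαβ hE hr (not_le.1 hc).le
      have hpos : 0 < sl w v γ β := by
        refine div_pos (sub_pos.2 ?_) (sub_pos.2 (C.strictB hE (h2.trans hαβ)))
        refine (C.monoA (EE_lower hE hαβ.le) h2.le).trans_lt ?_
        by_contra hc
        have : sl w v (ENNReal.ofReal α) β ≤ 0 :=
          div_nonpos_of_nonpos_of_nonneg (by linarith) (sub_nonneg.2 (C.strictB hE hαβ).le)
        linarith
      have hlev := C.level_of (h2.trans hαβ) hE hpos h4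
      have hγ : γ.toReal < α := by
        rw [← ENNReal.ofReal_lt_ofReal_iff_of_nonneg ENNReal.toReal_nonneg, ENNReal.ofReal_toReal h2.ne_top]
        exact h2
      exact hγ.ne (hmax _ _ hlev hγ.le le_rfl).1
  · obtain ⟨rfl, ha, hI⟩ := C.not_EE hl.2.2.1 hE
    exact C.RR_bad_le ha hI h0 hα

/-- the min-max formula -/
noncomputable def kk (a : ℝ≥0∞) (w : ℝ → ℝ) (v : ℝ → ℝ≥0∞) (t : ℝ) : ℝ≥0∞ :=
  ⨅ (α : ℝ) (_ : 0 ≤ α ∧ α < t), ⨆ (β : ℝ≥0∞) (_ : ENNReal.ofReal t < β ∧ β ≤ a), RR w v α β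

lemma kk_anti : Antitone (kk a w v) := by
  intro s t hst
  unfold kk
  refine le_iInf₂ fun α hα => ?_
  refine (iInf₂_le α ⟨hα.1, hα.2.trans_le hst⟩).trans ?_
  refine iSup₂_le fun β hβ => ?_
  exact le_iSup₂_of_le β ⟨(ENNReal.ofReal_le_ofReal hst).trans_lt hβ.1, hβ.2⟩ le_rfl

lemma Ctx.K1 (C : Ctx a w v) {α t : ℝ} {β : ℝ≥0∞} (hm : IsMaxLevelInterval a w v α β) (h1 : α < t)
    (h2 : ENNReal.ofReal t < β) : kk a w v t = RR w v α β := by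
  apply le_antisymm
  · refine (iInf₂_le α ⟨hm.1.1, h1⟩).trans (iSup₂_le fun γ hγ => ?_)
    rcases lt_trichotomy γ β with h | h | h
    · have hγ' : γ ≠ ∞ := h.ne_top
      have e := ENNReal.ofReal_toReal hγ'
      rw [← e, Ctx.Rq_RR ENNReal.toReal_nonneg]
      refine hm.1.2.2.2.2 _ (h1.trans ?_) (by rwa [e])
      exact (ENNReal.ofReal_lt_iff_lt_toReal (hm.1.1.trans h1.le) hγ').1 hγ.1
    · rw [h]
    · exact (C.max_right hm h hγ.2).le
  · refine le_iInf₂ fun γ hγ => ?_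
    refine (C.max_left hm hγ.1 ?_).trans (le_iSup₂_of_le β ⟨h2, hm.1.2.2.1⟩ le_rfl)
    exact (ENNReal.ofReal_le_ofReal hγ.2.le).trans_lt h2

end HL

namespace HL
open scoped Topology

variable {a : ℝ≥0∞} {w : ℝ → ℝ} {v : ℝ → ℝ≥0∞}

lemma Ctx.K4 (C : Ctx a w v) {α₁ α₂ t : ℝ} {β₁ β₂ : ℝ≥0∞} (hm₁ : IsMaxLevelInterval a w v α₁ β₁)
    (hm₂ : IsMaxLevelInterval a w v α₂ β₂) (h1 : α₁ < t) (h1' : ENNReal.ofReal t < β₁)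
    (h2 : α₂ < t) (h2' : ENNReal.ofReal t < β₂) : α₁ = α₂ ∧ β₁ = β₂ := by
  have e : RR w v α₁ β₁ = RR w v α₂ β₂ := by rw [← C.K1 hm₁ h1 h1', ← C.K1 hm₂ h2 h2']
  have aux : ∀ {α₁ α₂ : ℝ} {β₁ β₂ : ℝ≥0∞}, IsMaxLevelInterval a w v α₁ β₁ → IsMaxLevelInterval a w v α₂ β₂ →
      α₁ < t → RR w v α₁ β₁ = RR w v α₂ β₂ → ENNReal.ofReal t < β₂ → β₂ ≤ β₁ := by
    intro α₁ α₂ β₁ β₂ hm₁ hm₂ h1 e h2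
    by_contra hc
    have := C.max_right hm₁ (not_le.1 hc) hm₂.1.2.2.1
    have h3 := C.max_left hm₂ hm₁.1.1 ((ENNReal.ofReal_le_ofReal h1.le).trans_lt h2)
    exact absurd (this.trans_eq e) (not_lt.2 h3)
  have hβ : β₁ = β₂ := le_antisymm (aux hm₂ hm₁ h2 e.symm h1') (aux hm₁ hm₂ h1 e h2')
  subst hβ
  rcases le_total α₁ α₂ with h | h
  · exact ⟨(hm₂.2 _ _ hm₁.1 h le_rfl).1, rfl⟩
  · exact ⟨(hm₁.2 _ _ hm₂.1 h le_rfl).1.symm, rfl⟩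

lemma Ctx.sl_pos_iff (C : Ctx a w v) {x y : ℝ≥0∞} (hy : y ∈ EE a w) (h : x < y) : 0 < sl w v x y ↔ AA v x < AA v y := by
  have := sub_pos.2 (C.strictB hy h)
  unfold sl
  rw [div_pos_iff_of_pos_right this, sub_pos]

lemma ofReal_lt {x y : ℝ} (h0 : 0 ≤ x) (h : x < y) : ENNReal.ofReal x < ENNReal.ofReal y :=
  (ENNReal.ofReal_lt_ofReal_iff_of_nonneg h0).2 h

lemma Ctx.chain (C : Ctx a w v) {ι : Type} [Preorder ι] [IsDirectedOrder ι] [Nonempty ι] (α : ι → ℝ) (β : ι → ℝ≥0∞)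
    (hα : Antitone α) (hβ : Monotone β) (hl : ∀ i, IsLevelInterval a w v (α i) (β i)) :
    IsLevelInterval a w v (⨅ i, α i) (⨆ i, β i) := by
  have hbdd : BddBelow (range α) := ⟨0, by rintro _ ⟨i, rfl⟩; exact (hl i).1⟩
  have tα := tendsto_atTop_ciInf hα hbdd
  have tβ := tendsto_atTop_iSup hβ
  set x := ⨅ i, α i with hx
  set y := ⨆ i, β i with hy
  have hx0 : 0 ≤ x := le_ciInf fun i => (hl i).1
  have hxi : ∀ i, x ≤ α i := fun i => ciInf_le hbdd i
  have hyi : ∀ i, β i ≤ y := fun i => le_iSup β i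
  have hya : y ≤ a := iSup_le fun i => (hl i).2.2.1
  have hxy : ENNReal.ofReal x < y := by
    obtain ⟨i⟩ := ‹Nonempty ι›
    exact (ENNReal.ofReal_le_ofReal (hxi i)).trans_lt ((hl i).2.1.trans_le (hyi i))
  have tα' : Tendsto (fun i => ENNReal.ofReal (α i)) atTop (𝓝 (ENNReal.ofReal x)) :=
    (ENNReal.continuous_ofReal.tendsto _).comp tα
  -- limits at a fixed point
  have hlim : ∀ s, x < s → ENNReal.ofReal s ∈ EE a w → Tendsto (fun i => Rq w v (α i) s) atTop (𝓝 (Rq w v x s)) := by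
    intro s hs hsE
    have hc := (C.contsl hsE) (ENNReal.ofReal x, ENNReal.ofReal s) ⟨ofReal_lt hx0 hs, le_rfl⟩
    have ev : ∀ᶠ i in atTop, α i < s := tα.eventually (gt_mem_nhds hs)
    have ht : Tendsto (fun i => (ENNReal.ofReal (α i), ENNReal.ofReal s)) atTop
        (𝓝[{p | p.1 < p.2 ∧ p.2 ≤ ENNReal.ofReal s}] (ENNReal.ofReal x, ENNReal.ofReal s)) := by
      refine tendsto_nhdsWithin_iff.2 ⟨tα'.prodMk_nhds tendsto_const_nhds, ?_⟩
      filter_upwards [ev] with i hi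
      exact ⟨ofReal_lt (hl i).1 hi, le_rfl⟩
    rw [C.Rq_eq hx0 hs hsE]
    refine ((ENNReal.continuous_ofReal.tendsto _).comp (hc.tendsto.comp ht)).congr' ?_
    filter_upwards [ev] with i hi
    rw [C.Rq_eq (hl i).1 hi hsE]; rfl
  by_cases hE : y ∈ EE a w
  · refine ⟨hx0, hxy, hya, ?_, ?_⟩
    · rw [C.RR_eq hx0 hxy hE]
      apply ENNReal.ofReal_pos.2
      rw [C.sl_pos_iff hE hxy]
      obtain ⟨i⟩ := ‹Nonempty ι›
      have hEi : β i ∈ EE a w := EE_lower hE (hyi i)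
      have h1 := (C.sl_pos_iff hEi (hl i).2.1).1 (C.level_sl (hl i) hEi).1
      exact (C.monoA (EE_lower hEi (hl i).2.1.le) (ENNReal.ofReal_le_ofReal (hxi i))).trans_lt (h1.trans_le (C.monoA hE (hyi i)))
    · intro s hs1 hs2
      have l1 := hlim s hs1 (EE_lower hE hs2.le)
      have l2 : Tendsto (fun i => RR w v (α i) (β i)) atTop (𝓝 (RR w v x y)) := by
        have hc := (C.contsl hE) (ENNReal.ofReal x, y) ⟨hxy, le_rfl⟩
        have ht : Tendsto (fun i => (ENNReal.ofReal (α i), β i)) atTop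
            (𝓝[{p | p.1 < p.2 ∧ p.2 ≤ y}] (ENNReal.ofReal x, y)) := by
          refine tendsto_nhdsWithin_iff.2 ⟨tα'.prodMk_nhds tβ, ?_⟩
          exact Eventually.of_forall fun i => ⟨(hl i).2.1, hyi i⟩
        rw [C.RR_eq hx0 hxy hE]
        refine ((ENNReal.continuous_ofReal.tendsto _).comp (hc.tendsto.comp ht)).congr' ?_
        refine Eventually.of_forall fun i => ?_
        dsimp only [Function.comp]
        rw [C.RR_eq (hl i).1 (hl i).2.1 (EE_lower hE (hyi i))]
      refine le_of_tendsto_of_tendsto l1 l2 ?_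
      filter_upwards [tα.eventually (gt_mem_nhds hs1), tβ.eventually (lt_mem_nhds hs2)] with i h1 h2
      exact (hl i).2.2.2.2 s h1 h2
  · obtain ⟨hyt, ha, hI⟩ := C.not_EE hya hE
    have hEr : ∀ s : ℝ, ENNReal.ofReal s ∈ EE a w := fun s => C.EE_of_lt (by rw [ha]; exact ENNReal.ofReal_lt_top)
    rw [hyt] at tβ hya ⊢
    by_cases hex : ∃ i, β i = ∞
    · obtain ⟨i0, hi0⟩ := hex
      refine ⟨hx0, ENNReal.ofReal_lt_top, hya, ?_, ?_⟩
      · rw [C.RR_bad ha hI hx0 (hl i0).1, ← hi0]; exact (hl i0).2.2.2.1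
      · intro s hs1 hs2
        refine le_of_tendsto (hlim s hs1 (hEr s)) ?_
        filter_upwards [tα.eventually (gt_mem_nhds hs1), eventually_ge_atTop i0] with i h1 h2
        have hbi : β i = ∞ := top_le_iff.1 (hi0 ▸ hβ h2)
        have := (hl i).2.2.2.2 s h1 (by rw [hbi]; exact ENNReal.ofReal_lt_top)
        rwa [hbi, C.RR_bad ha hI (hl i).1 hx0] at this
    · push Not at hex
      have hB := C.Btend ha hI
      have tβr : Tendsto (fun i => (β i).toReal) atTop atTop := by
        rw [tendsto_atTop]
        intro M
        filter_upwards [tβ.eventually (lt_mem_nhds (ENNReal.ofReal_lt_top (r := M)))] with i hi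
        exact (ENNReal.ofReal_le_iff_le_toReal (hex i)).1 hi.le
      have key : ∀ s : ℝ, x < s → ENNReal.ofReal s < ∞ → Rq w v x s ≤ RR w v x ∞ := by
        intro s hs1 hs2
        by_contra hc
        obtain ⟨c, hc1, hc2⟩ := ENNReal.lt_iff_exists_nnreal_btwn.1 (not_le.1 hc)
        obtain ⟨c', hc1', hc2'⟩ := ENNReal.lt_iff_exists_nnreal_btwn.1 hc2
        have hcc : (c:ℝ) < c' := by exact_mod_cast hc1'
        unfold RR at hc1
        rw [if_pos rfl] at hc1
        have e1 := tβr.eventually (eventually_lt_of_limsup_lt hc1)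
        have e2 := (hlim s hs1 (hEr s)).eventually (lt_mem_nhds hc2')
        have e3 := tβr.eventually (hB.eventually_gt_atTop ((c' * AA (wE w) (ENNReal.ofReal s)) / (c' - c)))
        have e4 := tβr.eventually (eventually_gt_atTop s)
        have e5 : ∀ᶠ i in atTop, α i < s := tα.eventually (gt_mem_nhds hs1)
        obtain ⟨i, h1, h2, h3, h4, h5⟩ := (e1.and (e2.and (e3.and (e4.and e5)))).exists
        have eb := ENNReal.ofReal_toReal (hex i)
        set t := (β i).toReal with ht
        have h6 : Rq w v (α i) s ≤ Rq w v (α i) t := by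
          have := (hl i).2.2.2.2 s h5 (by rw [← eb]; exact ofReal_lt (hx0.trans hs1.le) h4)
          rwa [← eb, Ctx.Rq_RR ENNReal.toReal_nonneg] at this
        have h2 := h2.trans_le h6
        rw [C.Rq_eq hx0 (hs1.trans h4) (hEr t), ← ENNReal.ofReal_coe_nnreal] at h1
        rw [C.Rq_eq (hl i).1 (h5.trans h4) (hEr t), ← ENNReal.ofReal_coe_nnreal] at h2
        have hx' := ofReal_lt hx0 (hs1.trans h4)
        have hα' := ofReal_lt (hl i).1 (h5.trans h4)
        have h1 := (ENNReal.ofReal_lt_ofReal_iff_of_nonneg (C.sl_nonneg (hEr t) hx')).1 h1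
        have h2 := (ENNReal.ofReal_lt_ofReal_iff_of_nonneg c'.coe_nonneg).1 h2
        have s1 := C.strictB (hEr t) hx'
        have s2 := C.strictB (hEr t) hα'
        have s3 := C.strictB (hEr s) (ofReal_lt (hl i).1 h5)
        have s4 := C.monoA (hEr (α i)) (ENNReal.ofReal_le_ofReal (hxi i))
        have s5 : 0 ≤ AA (wE w) (ENNReal.ofReal x) := ENNReal.toReal_nonneg
        unfold sl at h1 h2
        rw [div_lt_iff₀ (by linarith)] at h1
        rw [lt_div_iff₀ (by linarith)] at h2
        rw [div_lt_iff₀ (by linarith)] at h3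
        have m1 := mul_le_mul_of_nonneg_left s3.le c'.coe_nonneg
        have m2 := mul_nonneg c.coe_nonneg s5
        nlinarith
      refine ⟨hx0, ENNReal.ofReal_lt_top, hya, ?_, key⟩
      obtain ⟨i⟩ := ‹Nonempty ι›
      have eb := ENNReal.ofReal_toReal (hex i)
      have hEi : β i ∈ EE a w := by rw [← eb]; exact hEr _
      have h1 := (C.sl_pos_iff hEi (hl i).2.1).1 (C.level_sl (hl i) hEi).1
      have hxb : x < (β i).toReal :=
        (hxi i).trans_lt ((ENNReal.ofReal_lt_iff_lt_toReal (hl i).1 (hex i)).1 (hl i).2.1)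
      refine lt_of_lt_of_le ?_ (key (β i).toReal hxb ENNReal.ofReal_lt_top)
      rw [C.Rq_eq hx0 hxb (hEr _), eb]
      apply ENNReal.ofReal_pos.2
      rw [C.sl_pos_iff hEi (by rw [← eb]; exact ofReal_lt hx0 hxb)]
      exact (C.monoA (hEr _) (ENNReal.ofReal_le_ofReal (hxi i))).trans_lt h1

lemma Ctx.K3 (C : Ctx a w v) {α : ℝ} {β : ℝ≥0∞} (hl : IsLevelInterval a w v α β) :
    ∃ α' β', IsMaxLevelInterval a w v α' β' ∧ α' ≤ α ∧ β ≤ β' := by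
  obtain ⟨m, hm1, hm2⟩ := zorn_le_nonempty₀ {p : ℝᵒᵈ × ℝ≥0∞ | IsLevelInterval a w v (OrderDual.ofDual p.1) p.2}
    (by
      intro c hcs hc y hy
      have : Nonempty c := ⟨⟨y, hy⟩⟩
      have : IsDirectedOrder c := by
        constructor
        intro p q
        rcases hc.total p.2 q.2 with h | h
        · exact ⟨q, h, le_rfl⟩
        · exact ⟨p, le_rfl, h⟩
      have := C.chain (ι := c) (fun i => OrderDual.ofDual i.1.1) (fun i => i.1.2)
        (fun i j h => h.1) (fun i j h => h.2) (fun i => hcs i.2)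
      refine ⟨_, (show (OrderDual.toDual _, _) ∈ _ from this), fun z hz => ⟨?_, ?_⟩⟩
      · show (⨅ i : c, OrderDual.ofDual i.1.1) ≤ OrderDual.ofDual z.1
        refine ciInf_le (f := fun i : c => OrderDual.ofDual i.1.1) ⟨0, ?_⟩ ⟨z, hz⟩
        rintro _ ⟨i, rfl⟩; exact (hcs i.2).1
      · exact le_iSup (fun i : c => i.1.2) ⟨z, hz⟩)
    (OrderDual.toDual α, β) hl
  refine ⟨OrderDual.ofDual m.1, m.2, ⟨hm2.1, fun α' β' hl' h1 h2 => ?_⟩, hm1.1, hm1.2⟩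
  have h3 := hm2.2 (y := (OrderDual.toDual α', β')) hl' ⟨h1, h2⟩
  exact ⟨le_antisymm h1 h3.1, le_antisymm h3.2 h2⟩

lemma Ctx.K2 (C : Ctx a w v) {t : ℝ} (ht : t ∈ Iset a) (cw : ContinuousAt w t) (cv : ContinuousAt v t)
    (hno : ∀ α β, IsLevelInterval a w v α β → α < t → ENNReal.ofReal t < β → False) :
    kk a w v t = v t / wE w t := by
  have hwt := C.wpos t ht
  have hw0 : wE w t ≠ 0 := by simp [wE, hwt]
  have hwT : wE w t ≠ ∞ := ENNReal.ofReal_ne_top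
  have hcont : Tendsto (fun s => v s / wE w s) (𝓝 t) (𝓝 (v t / wE w t)) :=
    ENNReal.Tendsto.div cv (Or.inr hw0) ((ENNReal.continuous_ofReal.tendsto _).comp cw) (Or.inl hwT)
  have hI : ∀ᶠ s in 𝓝 t, s ∈ Iset a := by
    have h1 : ∀ᶠ s in 𝓝 t, 0 < s := lt_mem_nhds ht.1
    have h2 : ∀ᶠ s in 𝓝 t, ENNReal.ofReal s < a := ENNReal.continuous_ofReal.continuousAt.eventually (gt_mem_nhds ht.2)
    exact h1.and h2
  have hw0' : ∀ s ∈ Iset a, wE w s ≠ 0 := fun s hs => by simp [wE, C.wpos s hs]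
  apply le_antisymm
  · by_contra hc
    obtain ⟨c, hc1, hc2⟩ := ENNReal.lt_iff_exists_nnreal_btwn.1 (not_le.1 hc)
    obtain ⟨δ, hδ, hball⟩ := Metric.eventually_nhds_iff_ball.1 (hI.and (hcont.eventually (gt_mem_nhds hc1)))
    simp only [Real.ball_eq_Ioo] at hball
    set α := t - δ / 2 with hα
    have hαI := (hball α ⟨by linarith, by linarith⟩).1
    have hαt : α < t := by linarith
    have hbd : ∀ s, α < s → s ≤ t → Rq w v α s ≤ c := by
      intro s hs1 hs2
      refine ENNReal.div_le_of_le_mul ?_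
      change _ ≤ (c:ℝ≥0∞) * (∫⁻ x in Ioo α s, wE w x)
      rw [← lintegral_const_mul _ C.wEmeas]
      refine setLIntegral_mono (C.wEmeas.const_mul _) fun x hx => ?_
      have := hball x ⟨by linarith [hx.1], by linarith [hx.2]⟩
      exact (ENNReal.div_le_iff (hw0' x this.1) ENNReal.ofReal_ne_top).1 this.2.le
    have h1 : (c:ℝ≥0∞) < ⨆ (β : ℝ≥0∞) (_ : ENNReal.ofReal t < β ∧ β ≤ a), RR w v α β :=
      hc2.trans_le (iInf₂_le α ⟨hαI.1.le, hαt⟩)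
    simp only [lt_iSup_iff] at h1
    have h2 : ∃ β, ENNReal.ofReal t < β ∧ β ∈ EE a w ∧ (c:ℝ≥0∞) < RR w v α β := by
      obtain ⟨β, ⟨hβ1, hβ2⟩, hβ3⟩ := h1
      by_cases hE : β ∈ EE a w
      · exact ⟨β, hβ1, hE, hβ3⟩
      · obtain ⟨rfl, ha, hI⟩ := C.not_EE hβ2 hE
        unfold RR at hβ3
        rw [if_pos rfl] at hβ3
        have e2 := frequently_lt_of_lt_limsup (by isBoundedDefault) hβ3
        obtain ⟨x, hx1, hx2⟩ := (e2.and_eventually (eventually_gt_atTop t)).exists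
        refine ⟨ENNReal.ofReal x, ofReal_lt ht.1.le hx2, C.EE_of_lt (by rw [ha]; exact ENNReal.ofReal_lt_top), ?_⟩
        rw [Ctx.Rq_RR (ht.1.trans hx2).le]; exact hx1
    obtain ⟨β, hβ1, hβ2, hβ3⟩ := h2
    have hαβ := (ofReal_lt hαI.1.le hαt).trans hβ1
    rw [C.RR_eq hαI.1.le hαβ hβ2, ← ENNReal.ofReal_coe_nnreal] at hβ3
    have hβ4 := (ENNReal.ofReal_lt_ofReal_iff_of_nonneg c.coe_nonneg).1 hβ3
    obtain ⟨β', h1, h2, h3, h4⟩ := C.M1 (ofReal_lt hαI.1.le hαt) hβ1 hβ2 (c := c) (fun s hs1 hs2 => by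
      have hst : s ≠ ∞ := ne_top_of_le_ne_top ENNReal.ofReal_ne_top hs2
      have e := ENNReal.ofReal_toReal hst
      have hs1' := (ENNReal.ofReal_lt_iff_lt_toReal hαI.1.le hst).1 hs1
      have hs2' : s.toReal ≤ t := ENNReal.toReal_le_of_le_ofReal ht.1.le hs2
      have := hbd s.toReal hs1' hs2'
      rw [C.Rq_eq hαI.1.le hs1' (by rw [e]; exact EE_lower hβ2 (hs2.trans hβ1.le)), e, ← ENNReal.ofReal_coe_nnreal] at this
      exact (ENNReal.ofReal_le_ofReal_iff c.coe_nonneg).1 this) hβ4.le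
    have hab := (ofReal_lt hαI.1.le hαt).trans h1
    have hpos : 0 < sl w v (ENNReal.ofReal α) β' := by
      have h5 : (0:ℝ≥0∞) < c := zero_le.trans_lt hc1
      have h6 : (0:ℝ) < c := by exact_mod_cast h5
      exact h6.trans_le h3
    have hlev := C.level_of hab (EE_lower hβ2 h2) hpos h4
    rw [ENNReal.toReal_ofReal hαI.1.le] at hlev
    exact hno _ _ hlev hαt h1
  · by_contra hc
    obtain ⟨c, hc1, hc2⟩ := ENNReal.lt_iff_exists_nnreal_btwn.1 (not_le.1 hc)
    have hc0 : (0:ℝ) < c := by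
      have : (0:ℝ≥0∞) < c := zero_le.trans_lt hc1
      exact_mod_cast this
    obtain ⟨δ, hδ, hball⟩ := Metric.eventually_nhds_iff_ball.1 (hI.and (hcont.eventually (lt_mem_nhds hc2)))
    simp only [Real.ball_eq_Ioo] at hball
    unfold kk at hc1
    simp only [iInf_lt_iff] at hc1
    obtain ⟨α, ⟨hα0, hαt⟩, hα⟩ := hc1
    set β := t + δ / 2 with hβ
    have hβI := (hball β ⟨by linarith, by linarith⟩).1
    have htβ : t < β := by linarith
    have hE : ENNReal.ofReal β ∈ EE a w := C.EE_of_lt hβI.2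
    have htβ' := ofReal_lt ht.1.le htβ
    have hαt' := ofReal_lt hα0 hαt
    have h1 : RR w v α (ENNReal.ofReal β) ≤ c :=
      (le_iSup₂_of_le (f := fun (β : ℝ≥0∞) (_ : ENNReal.ofReal t < β ∧ β ≤ a) => RR w v α β)
        (ENNReal.ofReal β) ⟨htβ', hE.1⟩ le_rfl).trans hα.le
    rw [C.RR_eq hα0 (hαt'.trans htβ') hE, ← ENNReal.ofReal_coe_nnreal] at h1
    have h1 := (ENNReal.ofReal_le_ofReal_iff c.coe_nonneg).1 h1
    have hbd : ∀ s, ENNReal.ofReal t ≤ s → s < ENNReal.ofReal β → (c:ℝ) ≤ sl w v s (ENNReal.ofReal β) := by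
      intro s hs1 hs2
      have hst : s ≠ ∞ := hs2.ne_top
      have e := ENNReal.ofReal_toReal hst
      have hs1' : t ≤ s.toReal := (ENNReal.ofReal_le_iff_le_toReal hst).1 hs1
      have hs2' : s.toReal < β := by
        rw [← e] at hs2; exact (ENNReal.ofReal_lt_ofReal_iff_of_nonneg ENNReal.toReal_nonneg).1 hs2
      have h3 : (c:ℝ≥0∞) ≤ Rq w v s.toReal β := by
        unfold Rq
        rw [ENNReal.le_div_iff_mul_le]
        · change (c:ℝ≥0∞) * (∫⁻ x in Ioo s.toReal β, wE w x) ≤ _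
          rw [← lintegral_const_mul _ C.wEmeas]
          refine setLIntegral_mono C.vanti.measurable fun x hx => ?_
          have := hball x ⟨by linarith [hx.1], by linarith [hx.2]⟩
          exact ENNReal.mul_le_of_le_div this.2.le
        · left; exact (C.int_pos ENNReal.toReal_nonneg hs2' hE.1).ne'
        · left
          change (∫⁻ x in Ioo s.toReal β, wE w x) ≠ ∞
          rw [int_eq ENNReal.toReal_nonneg hs2'.le hE.2]; exact ENNReal.ofReal_ne_top
      rw [C.Rq_eq ENNReal.toReal_nonneg hs2' hE, e, ← ENNReal.ofReal_coe_nnreal] at h3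
      exact (ENNReal.ofReal_le_ofReal_iff (C.sl_nonneg hE hs2)).1 h3
    obtain ⟨α', g1, g2, g3, g4⟩ := C.M2 hαt' htβ' hE hbd h1
    have hpos : 0 < sl w v α' (ENNReal.ofReal β) := by
      rw [C.sl_pos_iff hE (g2.trans htβ')]
      exact (C.monoA (EE_lower hE htβ'.le) g2.le).trans_lt
        ((C.sl_pos_iff hE htβ').1 (hc0.trans_le (hbd _ le_rfl htβ')))
    have hlev := C.level_of (g2.trans htβ') hE hpos g4
    refine hno _ _ hlev ?_ htβ'
    rw [← ENNReal.ofReal_toReal g2.ne_top] at g2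
    exact (ENNReal.ofReal_lt_ofReal_iff_of_nonneg ENNReal.toReal_nonneg).1 g2

end HL

namespace HL
open scoped Topology

variable {a : ℝ≥0∞} {w : ℝ → ℝ} {v : ℝ → ℝ≥0∞}

lemma isOpen_Iset (a : ℝ≥0∞) : IsOpen (Iset a) := by
  have : Iset a = Ioi (0:ℝ) ∩ ENNReal.ofReal ⁻¹' (Iio a) := by
    ext x; simp [Iset]
  rw [this]
  exact isOpen_Ioi.inter (isOpen_Iio.preimage ENNReal.continuous_ofReal)

lemma antitoneOn_ae_cont {X : Type*} [LinearOrder X] [TopologicalSpace X] [OrderTopology X] [SecondCountableTopology X] {g : ℝ → X} (hg : AntitoneOn g (Iset a)) :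
    ∀ᵐ t ∂(volume.restrict (Iset a)), ContinuousAt g t := by
  have h1 := hg.countable_not_continuousWithinAt
  have h2 : ∀ᵐ t ∂(volume.restrict (Iset a)), t ∉ {x | x ∈ Iset a ∧ ¬ ContinuousWithinAt g (Iset a) x} :=
    ae_restrict_of_ae (measure_eq_zero_iff_ae_notMem.1 (h1.measure_zero volume))
  filter_upwards [h2, ae_restrict_mem (measurableSet_Iset a)] with t ht hI
  have h3 : ContinuousWithinAt g (Iset a) t := by
    by_contra hc; exact ht ⟨hI, hc⟩
  exact h3.continuousAt ((isOpen_Iset a).mem_nhds hI)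

lemma Ctx.lev_max (C : Ctx a w v) {α t : ℝ} {β : ℝ≥0∞} (hm : IsMaxLevelInterval a w v α β) (h1 : α < t)
    (h2 : ENNReal.ofReal t < β) : levelFun a w v t = kk a w v t * wE w t := by
  have h : ∃ α β, IsMaxLevelInterval a w v α β ∧ α < t ∧ ENNReal.ofReal t < β := ⟨α, β, hm, h1, h2⟩
  unfold levelFun
  rw [dif_pos h]
  obtain ⟨g1, g2, g3⟩ := h.choose_spec.choose_spec
  rw [C.K1 g1 g2 g3, wE]

lemma Ctx.lev_ae (C : Ctx a w v) : ∀ᵐ t ∂(volume.restrict (Iset a)), levelFun a w v t = kk a w v t * wE w t := by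
  filter_upwards [antitoneOn_ae_cont C.wanti, antitoneOn_ae_cont (C.vanti.antitoneOn (Iset a)),
    ae_restrict_mem (measurableSet_Iset a)] with t hw hv ht
  by_cases h : ∃ α β, IsMaxLevelInterval a w v α β ∧ α < t ∧ ENNReal.ofReal t < β
  · obtain ⟨α, β, h1, h2, h3⟩ := h
    exact C.lev_max h1 h2 h3
  · rw [C.K2 ht hw hv, ENNReal.div_mul_cancel]
    · unfold levelFun; rw [dif_neg h]
    · simp [wE, C.wpos t ht]
    · exact ENNReal.ofReal_ne_top
    · intro α β hl h1 h2
      obtain ⟨α', β', hm, h3, h4⟩ := C.K3 hl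
      exact h ⟨α', β', hm, h3.trans_lt h1, h2.trans_le h4⟩

def JJ (α : ℝ) (β : ℝ≥0∞) : Set ℝ := {t | α < t ∧ ENNReal.ofReal t < β}

lemma isOpen_JJ (α : ℝ) (β : ℝ≥0∞) : IsOpen (JJ α β) := by
  have : JJ α β = Ioi α ∩ ENNReal.ofReal ⁻¹' (Iio β) := by
    ext x; simp [JJ]
  rw [this]
  exact isOpen_Ioi.inter (isOpen_Iio.preimage ENNReal.continuous_ofReal)

lemma II_addJ {u : ℝ → ℝ≥0∞} {α : ℝ} {β : ℝ≥0∞} (h0 : 0 ≤ α) (h : ENNReal.ofReal α < β) :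
    II u β = II u (ENNReal.ofReal α) + ∫⁻ s in JJ α β, u s := by
  have e : Iset β = Ioc 0 α ∪ JJ α β := by
    ext x
    simp only [Iset, JJ, mem_ofPred_eq, mem_union, mem_Ioc]
    constructor
    · rintro ⟨h1, h2⟩
      rcases le_or_gt x α with h3 | h3
      · exact Or.inl ⟨h1, h3⟩
      · exact Or.inr ⟨h3, h2⟩
    · rintro (⟨h1, h2⟩ | ⟨h1, h2⟩)
      · exact ⟨h1, (ENNReal.ofReal_le_ofReal h2).trans_lt h⟩
      · exact ⟨h0.trans_lt h1, h2⟩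
  rw [II_ofReal, II, e, lintegral_union (isOpen_JJ α β).measurableSet]
  · congr 1; exact setLIntegral_congr Ioo_ae_eq_Ioc.symm
  · rw [Set.disjoint_left]; intro x hx hx2; exact absurd hx.2 (not_le.2 hx2.1)

lemma int_eqJ {u : ℝ → ℝ≥0∞} {α : ℝ} {β : ℝ≥0∞} (h0 : 0 ≤ α) (h : ENNReal.ofReal α < β) (hf : II u β ≠ ∞) :
    ∫⁻ s in JJ α β, u s = ENNReal.ofReal (AA u β - AA u (ENNReal.ofReal α)) := by
  have h1 := II_addJ (u := u) h0 h
  have h2 : II u (ENNReal.ofReal α) ≠ ∞ := ne_top_of_le_ne_top hf (II_mono _ h.le)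
  have h3 : ∫⁻ s in JJ α β, u s ≠ ∞ := by
    intro h4; rw [h4] at h1; simp at h1; exact hf h1
  unfold AA
  rw [h1, ENNReal.toReal_add h2 h3, add_sub_cancel_left, ENNReal.ofReal_toReal h3]

lemma Ctx.int_J (C : Ctx a w v) {α : ℝ} {β : ℝ≥0∞} (hm : IsMaxLevelInterval a w v α β) :
    ∫⁻ t in JJ α β, kk a w v t * wE w t = ∫⁻ t in JJ α β, v t := by
  have h0 := hm.1.1
  have hαβ := hm.1.2.1
  have e1 : ∫⁻ t in JJ α β, kk a w v t * wE w t = RR w v α β * ∫⁻ t in JJ α β, wE w t := by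
    rw [← lintegral_const_mul _ C.wEmeas]
    refine setLIntegral_congr_fun (isOpen_JJ α β).measurableSet fun t ht => ?_
    rw [C.K1 hm ht.1 ht.2]
  rw [e1]
  by_cases hE : β ∈ EE a w
  · rw [C.RR_eq h0 hαβ hE, int_eqJ h0 hαβ hE.2, int_eqJ h0 hαβ (C.vfin hE), ← ENNReal.ofReal_mul (C.sl_nonneg hE hαβ)]
    have := C.strictB hE hαβ
    unfold sl
    rw [div_mul_cancel₀]
    linarith
  · obtain ⟨rfl, ha, hI⟩ := C.not_EE hm.1.2.2.1 hE
    have hEr : ∀ s : ℝ, ENNReal.ofReal s ∈ EE a w := fun s => C.EE_of_lt (by rw [ha]; exact ENNReal.ofReal_lt_top)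
    have h1 : ∫⁻ t in JJ α ∞, wE w t = ∞ := by
      have h2 := II_addJ (u := wE w) h0 hαβ
      rw [hI] at h2
      by_contra hne
      exact (ENNReal.add_ne_top.2 ⟨(hEr α).2, hne⟩) h2.symm
    rw [h1, ENNReal.mul_top hm.1.2.2.2.1.ne']
    by_contra hne
    have hV : II v ∞ ≠ ∞ := by
      rw [II_addJ h0 hαβ]; exact ENNReal.add_ne_top.2 ⟨C.vfin (hEr α), Ne.symm hne⟩
    obtain ⟨c, hc1, hc2⟩ := ENNReal.lt_iff_exists_nnreal_btwn.1 hm.1.2.2.2.1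
    have hc0 : (0:ℝ) < c := by exact_mod_cast hc1
    unfold RR at hc2
    rw [if_pos rfl] at hc2
    have e2 := frequently_lt_of_lt_limsup (by isBoundedDefault) hc2
    have e3 := (C.Btend ha hI).eventually_gt_atTop (AA (wE w) (ENNReal.ofReal α) + (II v ∞).toReal / c)
    obtain ⟨t, ht1, ht2, ht3⟩ := (e2.and_eventually (e3.and (eventually_gt_atTop α))).exists
    rw [C.Rq_eq h0 ht3 (hEr t), ← ENNReal.ofReal_coe_nnreal] at ht1
    have ht1 := (ENNReal.ofReal_lt_ofReal_iff_of_nonneg c.coe_nonneg).1 ht1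
    have s1 := C.strictB (hEr t) (ofReal_lt h0 ht3)
    unfold sl at ht1
    rw [lt_div_iff₀ (by linarith)] at ht1
    have s2 : AA v (ENNReal.ofReal t) ≤ (II v ∞).toReal := ENNReal.toReal_mono hV (II_mono _ le_top)
    have s3 : 0 ≤ AA v (ENNReal.ofReal α) := ENNReal.toReal_nonneg
    have s4 : (II v ∞).toReal / c < AA (wE w) (ENNReal.ofReal t) - AA (wE w) (ENNReal.ofReal α) := by linarith
    rw [div_lt_iff₀ hc0] at s4
    nlinarith

lemma Ctx.sat (C : Ctx a w v) {S : Set ℝ} (hS : MeasurableSet S) (hSI : S ⊆ Iset a)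
    (h : ∀ α β, IsMaxLevelInterval a w v α β → JJ α β ⊆ S ∨ Disjoint (JJ α β) S) :
    ∫⁻ t in S, kk a w v t * wE w t = ∫⁻ t in S, v t := by
  set P : Set (ℝ × ℝ≥0∞) := {p | IsMaxLevelInterval a w v p.1 p.2 ∧ JJ p.1 p.2 ⊆ S} with hP
  have hdisj : P.PairwiseDisjoint (fun p => JJ p.1 p.2) := by
    intro p hp q hq hpq
    rw [Function.onFun, Set.disjoint_left]
    intro t ht1 ht2
    have := C.K4 hp.1 hq.1 ht1.1 ht1.2 ht2.1 ht2.2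
    exact hpq (Prod.ext this.1 this.2)
  have hcount : P.Countable := by
    refine hdisj.countable_of_isOpen (fun p _ => isOpen_JJ _ _) fun p hp => ?_
    obtain ⟨d, hd1, hd2⟩ := exists_between hp.1.1.2.1
    refine ⟨d.toReal, ?_, ?_⟩
    · exact (ENNReal.ofReal_lt_iff_lt_toReal hp.1.1.1 hd2.ne_top).1 hd1
    · rwa [ENNReal.ofReal_toReal hd2.ne_top]
  set U := ⋃ p ∈ P, JJ p.1 p.2 with hU
  have hUm : MeasurableSet U := MeasurableSet.biUnion hcount fun p _ => (isOpen_JJ _ _).measurableSet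
  have hUS : U ⊆ S := iUnion₂_subset fun p hp => hp.2
  have e : S = U ∪ S \ U := (union_sdiff_cancel hUS).symm
  have hd : Disjoint U (S \ U) := disjoint_sdiff_right
  rw [e, lintegral_union (hS.diff hUm) hd, lintegral_union (hS.diff hUm) hd]
  congr 1
  · rw [hU, lintegral_biUnion hcount (fun p _ => (isOpen_JJ _ _).measurableSet) hdisj,
      lintegral_biUnion hcount (fun p _ => (isOpen_JJ _ _).measurableSet) hdisj]
    exact tsum_congr fun p => C.int_J p.2.1
  · refine lintegral_congr_ae ?_
    have h1 := ae_restrict_of_ae_restrict_of_subset (sdiff_subset.trans hSI : S \ U ⊆ Iset a) C.lev_ae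
    filter_upwards [h1, ae_restrict_mem (hS.diff hUm)] with t ht1 ht2
    rw [← ht1]
    unfold levelFun
    rw [dif_neg]
    rintro ⟨α, β, hm, g1, g2⟩
    have ht : t ∈ JJ α β := ⟨g1, g2⟩
    rcases h α β hm with h' | h'
    · exact ht2.2 (mem_biUnion (show (α, β) ∈ P from ⟨hm, h'⟩) ht)
    · exact Set.disjoint_left.1 h' ht ht2.1

lemma Ctx.kk_fin (C : Ctx a w v) {t : ℝ} (ht : t ∈ Iset a) : kk a w v t ≠ ∞ := by
  obtain ⟨K, M, hK, hM, H⟩ := C.vb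
  have hI0 : II (wE w) (ENNReal.ofReal t) ≠ 0 := by
    rw [II_ofReal]; exact (C.int_pos le_rfl ht.1 ht.2.le).ne'
  have hb : K / II (wE w) (ENNReal.ofReal t) + M ≠ ∞ := ENNReal.add_ne_top.2 ⟨ENNReal.div_ne_top hK hI0, hM⟩
  have key : ∀ x : ℝ, t < x → ENNReal.ofReal x ≤ a → Rq w v 0 x ≤ K / II (wE w) (ENNReal.ofReal t) + M := by
    intro x hx hxa
    have e : Rq w v 0 x = II v (ENNReal.ofReal x) / II (wE w) (ENNReal.ofReal x) := by
      rw [II_ofReal, II_ofReal]; rfl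
    rw [e]
    refine (ENNReal.div_le_div_right (H _ hxa) _).trans ?_
    rw [ENNReal.add_div]
    refine add_le_add (ENNReal.div_le_div_left (II_mono _ (ENNReal.ofReal_le_ofReal hx.le)) _) ?_
    exact ENNReal.div_le_of_le_mul le_rfl
  refine ne_top_of_le_ne_top hb ((iInf₂_le 0 ⟨le_rfl, ht.1⟩).trans (iSup₂_le fun β hβ => ?_))
  by_cases h : β = ∞
  · unfold RR
    rw [if_pos h]
    refine limsup_le_of_le (by isBoundedDefault) ?_
    filter_upwards [eventually_gt_atTop t] with x hx
    exact key x hx (le_top.trans (h ▸ hβ.2))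
  · unfold RR
    rw [if_neg h]
    refine key _ ((ENNReal.ofReal_lt_iff_lt_toReal ht.1.le h).1 hβ.1) ?_
    rw [ENNReal.ofReal_toReal h]; exact hβ.2

lemma Ctx.major (C : Ctx a w v) (hv0 : ∀ t, a ≤ ENNReal.ofReal t → v t = 0) {x : ℝ} (hx : 0 < x) :
    ∫⁻ t in Ioo 0 x, v t ≤ ∫⁻ t in Ioo 0 x ∩ Iset a, kk a w v t * wE w t ∧
    ∫⁻ t in Ioo 0 x ∩ Iset a, kk a w v t * wE w t ≠ ∞ := by
  by_cases hxa : ENNReal.ofReal x < a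
  · have hsub : ∀ y, y ≤ x → Ioo 0 y ⊆ Iset a := fun y hy z hz => ⟨hz.1, (ENNReal.ofReal_le_ofReal (hz.2.le.trans hy)).trans_lt hxa⟩
    rw [inter_eq_left.2 (hsub x le_rfl)]
    have hE := C.EE_of_lt hxa
    by_cases hin : ∃ α β, IsMaxLevelInterval a w v α β ∧ α < x ∧ ENNReal.ofReal x < β
    · obtain ⟨α, β, hm, h1, h2⟩ := hin
      have h0 := hm.1.1
      have hS := C.sat (S := Ioc 0 α) measurableSet_Ioc (fun z hz => ⟨hz.1, (ENNReal.ofReal_le_ofReal (hz.2.trans h1.le)).trans_lt hxa⟩) (by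
        intro α' β' hm'
        by_contra hc
        push Not at hc
        obtain ⟨hc1, hc2⟩ := hc
        rw [Set.not_subset] at hc1
        rw [Set.not_disjoint_iff] at hc2
        obtain ⟨z', hz', hz'n⟩ := hc1
        obtain ⟨z, hz, hzS⟩ := hc2
        have hz0 : 0 < z' := hm'.1.1.trans_lt hz'.1
        have hαz' : α < z' := by
          by_contra hn; exact hz'n ⟨hz0, not_lt.1 hn⟩
        obtain ⟨y, hy1, hy2⟩ := exists_between (lt_min hαz' h1)
        have hα' : α' < α := hz.1.trans_le hzS.2
        have := C.K4 hm hm' hy1 ((ENNReal.ofReal_le_ofReal (hy2.le.trans (min_le_right _ _))).trans_lt h2)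
          (hα'.trans hy1) ((ENNReal.ofReal_le_ofReal (hy2.le.trans (min_le_left _ _))).trans_lt hz'.2)
        exact hα'.ne this.1.symm)
      have e : Ioo 0 x = Ioc 0 α ∪ Ioo α x := (Ioc_union_Ioo_eq_Ioo h0 h1).symm
      have hd : Disjoint (Ioc 0 α) (Ioo α x) := by
        rw [Set.disjoint_left]; intro x hx hx2; exact absurd hx.2 (not_le.2 hx2.1)
      rw [e, lintegral_union measurableSet_Ioo hd, lintegral_union measurableSet_Ioo hd, hS]
      have e2 : ∫⁻ t in Ioo α x, kk a w v t * wE w t = RR w v α β * ∫⁻ t in Ioo α x, wE w t := by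
        rw [← lintegral_const_mul _ C.wEmeas]
        refine setLIntegral_congr_fun measurableSet_Ioo fun t ht => ?_
        rw [C.K1 hm ht.1 ((ENNReal.ofReal_le_ofReal ht.2.le).trans_lt h2)]
      have f1 : ∫⁻ t in Ioo α x, wE w t ≠ ∞ := by rw [int_eq h0 h1.le hE.2]; exact ENNReal.ofReal_ne_top
      have f2 : ∫⁻ t in Ioo α x, wE w t ≠ 0 := (C.int_pos h0 h1 hE.1).ne'
      constructor
      · refine add_le_add le_rfl ?_
        rw [e2]
        have : Rq w v α x * ∫⁻ t in Ioo α x, wE w t = ∫⁻ t in Ioo α x, v t := ENNReal.div_mul_cancel f2 f1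
        rw [← this]
        gcongr
        exact hm.1.2.2.2.2 x h1 h2
      · refine ENNReal.add_ne_top.2 ⟨?_, ?_⟩
        · refine ne_top_of_le_ne_top (C.vfin hE) ?_
          rw [II_ofReal]
          exact lintegral_mono_set fun z hz => ⟨hz.1, hz.2.trans_lt h1⟩
        · rw [e2, ← C.K1 hm h1 h2]
          exact ENNReal.mul_ne_top (C.kk_fin ⟨hx, hxa⟩) f1
    · have hS := C.sat (S := Ioo 0 x) measurableSet_Ioo (hsub x le_rfl) (by
        intro α' β' hm'
        by_contra hc
        push Not at hc
        obtain ⟨hc1, hc2⟩ := hc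
        rw [Set.not_subset] at hc1
        rw [Set.not_disjoint_iff] at hc2
        obtain ⟨z', hz', hz'n⟩ := hc1
        obtain ⟨z, hz, hzS⟩ := hc2
        have hz0 : 0 < z' := hm'.1.1.trans_lt hz'.1
        have hαz' : x ≤ z' := by
          by_contra hn; exact hz'n ⟨hz0, not_le.1 hn⟩
        exact hin ⟨α', β', hm', hz.1.trans hzS.2, (ENNReal.ofReal_le_ofReal hαz').trans_lt hz'.2⟩)
      rw [hS]
      refine ⟨le_rfl, ?_⟩
      rw [← II_ofReal]; exact C.vfin hE
  · have hax := not_lt.1 hxa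
    have e : Ioo 0 x ∩ Iset a = Iset a := by
      apply inter_eq_right.2
      rw [← Iset_ofReal]; exact Iset_mono hax
    have hS := C.sat (S := Iset a) (measurableSet_Iset a) le_rfl (by
      intro α β hm
      left
      exact fun z hz => ⟨hm.1.1.trans_lt hz.1, hz.2.trans_le hm.1.2.2.1⟩)
    rw [e, hS]
    constructor
    · have hsub : Ioo 0 x ⊆ Iset a ∪ {t | a ≤ ENNReal.ofReal t} := by
        intro z hz
        rcases lt_or_ge (ENNReal.ofReal z) a with h | h
        · exact Or.inl ⟨hz.1, h⟩
        · exact Or.inr h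
      refine (lintegral_mono_set hsub).trans ((lintegral_union_le _ _ _).trans ?_)
      have : ∫⁻ s in {t | a ≤ ENNReal.ofReal t}, v s = 0 := by
        rw [setLIntegral_congr_fun (measurableSet_le measurable_const ENNReal.measurable_ofReal) (g := fun _ => 0)]
        · simp
        · intro z hz; exact hv0 z hz
      rw [this, add_zero]
    · refine C.vfin ?_
      by_contra hc
      obtain ⟨h1, -⟩ := C.not_EE le_rfl hc
      rw [h1] at hax; simp at hax

lemma Ctx.dich (C : Ctx a w v) :
    (a = ∞ ∧ II (wE w) ∞ = ∞ ∧ ∃ r : NNReal, 0 < r ∧ ∃ᶠ x : ℝ in atTop,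
      (r:ℝ≥0∞) * II (wE w) (ENNReal.ofReal x) ≤ II v (ENNReal.ofReal x)) ∨
    (∀ ε : ℝ≥0∞, 0 < ε → ∫⁻ t in Iset a ∩ {t | ε < kk a w v t}, wE w t ≠ ∞) := by
  by_cases hE : a ∈ EE a w
  · right
    intro ε _
    exact ne_top_of_le_ne_top hE.2 (lintegral_mono_set inter_subset_left)
  · obtain ⟨-, ha, hI⟩ := C.not_EE le_rfl hE
    have e : ∀ x, Rq w v 0 x = II v (ENNReal.ofReal x) / II (wE w) (ENNReal.ofReal x) := by
      intro x; rw [II_ofReal, II_ofReal]; rfl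
    by_cases hL : RR w v 0 ∞ = 0
    · right
      intro ε hε
      have h1 : ∀ᶠ x in atTop, Rq w v 0 x < ε := by
        unfold RR at hL; rw [if_pos rfl] at hL
        exact eventually_lt_of_limsup_lt (by rw [hL]; exact hε)
      obtain ⟨T, hT⟩ := eventually_atTop.1 h1
      set T' := max T 1
      have hT0 : 0 < T' := lt_max_of_lt_right one_pos
      have hkT : kk a w v T' ≤ ε := by
        refine (iInf₂_le 0 ⟨le_rfl, hT0⟩).trans (iSup₂_le fun β hβ => ?_)
        by_cases h : β = ∞
        · rw [h, hL]; exact zero_le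
        · unfold RR
          rw [if_neg h]
          exact (hT _ ((le_max_left _ _).trans ((ENNReal.ofReal_lt_iff_lt_toReal hT0.le h).1 hβ.1).le)).le
      refine ne_top_of_le_ne_top (C.EE_of_lt (β := ENNReal.ofReal T') (by rw [ha]; exact ENNReal.ofReal_lt_top)).2 ?_
      rw [II_ofReal]
      refine lintegral_mono_set fun t ht => ⟨ht.1.1, ?_⟩
      by_contra hc
      exact absurd (ht.2.trans_le ((kk_anti (not_lt.1 hc)).trans hkT)) (lt_irrefl _)
    · left
      refine ⟨ha, hI, ?_⟩
      obtain ⟨r, hr1, hr2⟩ := ENNReal.lt_iff_exists_nnreal_btwn.1 (pos_iff_ne_zero.2 hL)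
      refine ⟨r, by exact_mod_cast hr1, ?_⟩
      unfold RR at hr2; rw [if_pos rfl] at hr2
      have e2 := frequently_lt_of_lt_limsup (by isBoundedDefault) hr2
      refine e2.mono fun x hx => ?_
      rw [e] at hx
      exact ENNReal.mul_le_of_le_div hx.le

end HL

namespace HL
open scoped Topology


variable {a : ℝ≥0∞} {w : ℝ → ℝ} {v : ℝ → ℝ≥0∞}

lemma lintegral_scale {F : ℝ → ℝ≥0∞} (hF : Measurable F) :
    ∫⁻ t, F t = 2 * ∫⁻ t, F (2 * t) := by
  have h := Real.smul_map_volume_mul_left (a := 2) (by norm_num)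
  conv_lhs => rw [← h]
  rw [lintegral_smul_measure, lintegral_map hF (measurable_const_mul 2)]
  simp

lemma half_int {f u h : ℝ → ℝ} (hf : ∀ᵐ x ∂(volI a), f x = u x + h x) (x : ℝ) :
    ∫⁻ t in Ioo 0 x, rearr (volI a) f t ≤
      2 * ((∫⁻ t in Ioo 0 (x/2), rearr (volI a) u t) + ∫⁻ t in Ioo 0 (x/2), rearr (volI a) h t) := by
  have m1 := (rearr_antitone (volI a) f).measurable
  have m2 := (rearr_antitone (volI a) u).measurable
  rw [← lintegral_indicator measurableSet_Ioo, lintegral_scale (m1.indicator measurableSet_Ioo),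
    ← lintegral_add_left m2, ← lintegral_indicator measurableSet_Ioo]
  gcongr with t
  by_cases ht : t ∈ Ioo 0 (x/2)
  · have ht2 : 2 * t ∈ Ioo 0 x := ⟨by linarith [ht.1], by linarith [ht.2]⟩
    rw [indicator_of_mem ht, indicator_of_mem ht2]
    exact rearr_add_le hf ht.1.le
  · have ht2 : 2 * t ∉ Ioo 0 x := fun hc => ht ⟨by linarith [hc.1], by linarith [hc.2]⟩
    rw [indicator_of_notMem ht2]; exact zero_le

lemma mkCtx (ha : 0 < a)
    (hw_pos : ∀ x ∈ Iset a, 0 < w x) (hw_anti : AntitoneOn w (Iset a)) (hw_meas : Measurable w)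
    (hW_fin : ∀ t ∈ Iset a, ∫⁻ s in Set.Ioo 0 t, ENNReal.ofReal (w s) ≠ ∞)
    (f : ℝ → ℝ)
    (hL1MW : ∃ u h : ℝ → ℝ, Measurable u ∧ Measurable h ∧
      (∀ᵐ x ∂(volI a), f x = u x + h x) ∧
      (∫⁻ x in Iset a, ENNReal.ofReal |u x|) ≠ ∞ ∧ MWnorm a w h ≠ ∞) :
    Ctx a w (rearr (volI a) f) := by
  refine ⟨ha, hw_pos, hw_anti, hw_meas, fun t ht => by rw [II_ofReal]; exact hW_fin t ht,
    rearr_antitone _ _, ?_⟩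
  obtain ⟨u, h, hu, hh, hf, hu1, hM⟩ := hL1MW
  refine ⟨2 * ∫⁻ x in Iset a, ENNReal.ofReal |u x|, 2 * MWnorm a w h,
    ENNReal.mul_ne_top (by simp) hu1, ENNReal.mul_ne_top (by simp) hM, ?_⟩
  have key : ∀ x : ℝ, ENNReal.ofReal x ≤ a → II (rearr (volI a) f) (ENNReal.ofReal x) ≤
      2 * (∫⁻ x in Iset a, ENNReal.ofReal |u x|) + 2 * MWnorm a w h * II (wE w) (ENNReal.ofReal x) := by
    intro x hx
    by_cases hx0 : 0 < x
    · rw [II_ofReal]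
      refine (half_int hf x).trans ?_
      rw [mul_add, mul_assoc]
      have hxI : x / 2 ∈ Iset a := ⟨by linarith, lt_of_lt_of_le
        ((ENNReal.ofReal_lt_ofReal_iff hx0).2 (by linarith)) hx⟩
      refine add_le_add (mul_le_mul_right ?_ _) (mul_le_mul_right ?_ _)
      · exact (lintegral_mono_set (fun t ht => ht.1)).trans (lintegral_rearr_le u hu)
      · have h1 : (∫⁻ t in Set.Ioo 0 (x/2), rearr (volI a) h t) / (∫⁻ t in Set.Ioo 0 (x/2), ENNReal.ofReal (w t))
          ≤ MWnorm a w h := le_iSup₂_of_le (x/2) hxI le_rfl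
        have h2 : (∫⁻ t in Set.Ioo 0 (x/2), ENNReal.ofReal (w t)) ≠ 0 := by
          intro h0
          rw [lintegral_eq_zero_iff hw_meas.ennreal_ofReal, Filter.EventuallyEq,
            ae_restrict_iff' measurableSet_Ioo] at h0
          have h3 : volume (Ioo 0 (x/2)) = 0 := by
            rw [measure_eq_zero_iff_ae_notMem]
            filter_upwards [h0] with t ht htm
            have := ht htm
            simp only [Pi.zero_apply, ENNReal.ofReal_eq_zero] at this
            exact absurd (hw_pos t ⟨htm.1, (ENNReal.ofReal_le_ofReal htm.2.le).trans_lt hxI.2⟩) (not_lt.2 this)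
          rw [Real.volume_Ioo, ENNReal.ofReal_eq_zero] at h3
          linarith
        rw [ENNReal.div_le_iff h2 (hW_fin _ hxI)] at h1
        refine h1.trans (mul_le_mul_right ?_ _)
        rw [II_ofReal]
        exact lintegral_mono_set (Ioo_subset_Ioo_right (by linarith))
    · rw [II_ofReal, Ioo_eq_empty hx0]; simp
  intro β hβ
  by_cases hβt : β = ∞
  · subst hβt
    rw [II_iSup]
    refine iSup_le fun n => (key n (le_top.trans hβ)).trans ?_
    gcongr
    exact II_mono _ le_top
  · have := key β.toReal (by rwa [ENNReal.ofReal_toReal hβt])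
    rwa [ENNReal.ofReal_toReal hβt] at this

section phi
variable {φ : ℝ → ℝ}

lemma phi_mono (hc : ConvexOn ℝ (Set.Ici 0) φ) (h0 : φ 0 = 0) (hp : ∀ t : ℝ, 0 < t → 0 < φ t) :
    MonotoneOn φ (Ici 0) := by
  intro x hx y hy hxy
  rcases (show (0:ℝ) ≤ x from hx).eq_or_lt with h | h
  · subst h
    rw [h0]
    rcases (show (0:ℝ) ≤ y from hy).eq_or_lt with h | h
    · rw [← h, h0]
    · exact (hp y h).le
  · have hy0 : 0 < y := h.trans_le hxy
    have h1' : x / y ≤ 1 := by rw [div_le_one hy0]; exact hxy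
    have := hc.2 (show (0:ℝ) ∈ Ici (0:ℝ) from self_mem_Ici) hy (show (0:ℝ) ≤ 1 - x / y by linarith)
      (show (0:ℝ) ≤ x / y by positivity) (by ring)
    simp only [smul_eq_mul, mul_zero, zero_add, h0, div_mul_cancel₀ _ hy0.ne'] at this
    refine this.trans ?_
    have h1 : x / y ≤ 1 := by rw [div_le_one hy0]; exact hxy
    nlinarith [hp y hy0]

lemma phiE_mono (hc : ConvexOn ℝ (Set.Ici 0) φ) (h0 : φ 0 = 0) (hp : ∀ t : ℝ, 0 < t → 0 < φ t) :
    Monotone (phiE φ) := by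
  intro x y hxy
  unfold phiE
  by_cases hy : y = ∞
  · simp [hy]
  · have hx : x ≠ ∞ := ne_top_of_le_ne_top hy hxy
    rw [if_neg hx, if_neg hy]
    exact ENNReal.ofReal_le_ofReal (phi_mono hc h0 hp ENNReal.toReal_nonneg ENNReal.toReal_nonneg
      (ENNReal.toReal_mono hy hxy))

end phi

lemma Ctx.rhs_eq (C : Ctx a w v) (φ : ℝ → ℝ) :
    ∫⁻ t in Iset a, phiE φ (levelFun a w v t / ENNReal.ofReal (w t)) * ENNReal.ofReal (w t) =
    ∫⁻ t in Iset a, phiE φ (kk a w v t) * wE w t := by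
  refine lintegral_congr_ae ?_
  filter_upwards [C.lev_ae, ae_restrict_mem (measurableSet_Iset a)] with t ht hI
  rw [ht]
  have : wE w t ≠ 0 := by simpa [wE] using C.wpos t hI
  change phiE φ (kk a w v t * wE w t / wE w t) * wE w t = _
  rw [ENNReal.mul_div_cancel_right this ENNReal.ofReal_ne_top]

noncomputable def gg (a : ℝ≥0∞) (w : ℝ → ℝ) (v : ℝ → ℝ≥0∞) : ℝ → ℝ :=
  (Iset a).indicator fun t => (kk a w v t * wE w t).toReal

lemma Ctx.gg_val (C : Ctx a w v) {t : ℝ} (ht : t ∈ Iset a) :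
    ENNReal.ofReal |gg a w v t| = kk a w v t * wE w t := by
  rw [gg, indicator_of_mem ht, abs_of_nonneg ENNReal.toReal_nonneg, ENNReal.ofReal_toReal]
  exact ENNReal.mul_ne_top (C.kk_fin ht) ENNReal.ofReal_ne_top

lemma Ctx.gg_meas (C : Ctx a w v) : Measurable (gg a w v) :=
  ((kk_anti.measurable.mul C.wEmeas).ennreal_toReal).indicator (measurableSet_Iset a)

lemma Ctx.kw_anti (C : Ctx a w v) : AntitoneOn (fun t => kk a w v t * wE w t) (Iset a) :=
  fun _ hs _ ht hst => mul_le_mul' (kk_anti hst) (ENNReal.ofReal_le_ofReal (C.wanti hs ht hst))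

lemma Ctx.gg_le (C : Ctx a w v) {t : ℝ} (ht : t ∈ Iset a) :
    rearr (volI a) (gg a w v) t ≤ kk a w v t * wE w t := by
  refine rearr_le_of fun s' hs' => ?_
  rw [volI, Measure.restrict_apply (measurableSet_lt measurable_const C.gg_meas.abs.ennreal_ofReal)]
  have : {x | s' < ENNReal.ofReal |gg a w v x|} ∩ Iset a ⊆ Ioo 0 t := by
    rintro x ⟨hx, hI⟩
    refine ⟨hI.1, ?_⟩
    by_contra hc
    rw [mem_ofPred_eq, C.gg_val hI] at hx
    exact absurd (C.kw_anti ht hI (not_lt.1 hc)) (not_le.2 (hs'.trans hx))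
  refine (measure_mono this).trans ?_
  rw [Real.volume_Ioo, sub_zero]

lemma Ctx.gg_ge (C : Ctx a w v) : ∀ᵐ t ∂(volume.restrict (Iset a)),
    kk a w v t * wE w t ≤ rearr (volI a) (gg a w v) t := by
  filter_upwards [antitoneOn_ae_cont C.kw_anti, ae_restrict_mem (measurableSet_Iset a)] with t hc hI
  by_contra hn
  rw [not_le] at hn
  obtain ⟨s, hs1, hs2⟩ := exists_between hn
  have e1 : ∀ᶠ x in 𝓝 t, s < kk a w v x * wE w x := hc.eventually (lt_mem_nhds hs2)
  have e2 : ∀ᶠ x in 𝓝 t, x ∈ Iset a := (isOpen_Iset a).mem_nhds hI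
  have e3 : ∀ᶠ x in 𝓝[>] t, t < x := self_mem_nhdsWithin
  obtain ⟨x, ⟨hx1, hx2⟩, hx⟩ := (((e1.and e2).filter_mono (nhdsWithin_le_nhds (s := Ioi t))).and e3).exists
  have : ∀ s', 0 < s' ∧ volI a {x | s' < ENNReal.ofReal |gg a w v x|} ≤ ENNReal.ofReal t → s ≤ s' := by
    rintro s' ⟨_, h⟩
    by_contra hlt
    rw [not_le] at hlt
    rw [volI, Measure.restrict_apply (measurableSet_lt measurable_const C.gg_meas.abs.ennreal_ofReal)] at h
    have hsub : Ioo 0 x ⊆ {x | s' < ENNReal.ofReal |gg a w v x|} ∩ Iset a := by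
      intro y hy
      have hyI : y ∈ Iset a := ⟨hy.1, (ENNReal.ofReal_le_ofReal hy.2.le).trans_lt hx2.2⟩
      refine ⟨?_, hyI⟩
      rw [mem_ofPred_eq, C.gg_val hyI]
      exact hlt.trans (hx1.trans_le (C.kw_anti hyI hx2 hy.2.le))
    have h2 := (measure_mono hsub).trans h
    rw [Real.volume_Ioo, sub_zero] at h2
    exact absurd h2 (not_le.2 ((ENNReal.ofReal_lt_ofReal_iff hx2.1).2 hx))
  exact absurd (le_sInf (fun s' h => this s' h) : s ≤ rearr (volI a) (gg a w v) t) (not_le.2 hs1)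

lemma gg_cut (g : ℝ → ℝ) (x : ℝ) : ∫⁻ t in Ioo 0 x, rearr (volI a) g t =
    ∫⁻ t in Ioo 0 x ∩ Iset a, rearr (volI a) g t := by
  rw [← lintegral_indicator measurableSet_Ioo,
    ← lintegral_indicator (measurableSet_Ioo.inter (measurableSet_Iset a))]
  congr 1; ext t
  by_cases h1 : t ∈ Ioo 0 x
  · by_cases h2 : t ∈ Iset a
    · rw [indicator_of_mem h1, indicator_of_mem (show t ∈ Ioo 0 x ∩ Iset a from ⟨h1, h2⟩)]
    · rw [indicator_of_mem h1, indicator_of_notMem (fun h => h2 h.2)]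
      exact rearr_eq_zero (not_lt.1 fun h => h2 ⟨h1.1, h⟩)
  · rw [indicator_of_notMem h1, indicator_of_notMem (fun h => h1 h.1)]

lemma Ctx.upper (C : Ctx a w v) (hv0 : ∀ t, a ≤ ENNReal.ofReal t → v t = 0) {φ : ℝ → ℝ}
    (hc : ConvexOn ℝ (Set.Ici 0) φ) (h0 : φ 0 = 0) (hp : ∀ t : ℝ, 0 < t → 0 < φ t) :
    Measurable (gg a w v) ∧
        (∀ x : ℝ, 0 < x → ∫⁻ t in Set.Ioo 0 x, rearr (volI a) (gg a w v) t ≠ ∞) ∧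
        (∀ x : ℝ, 0 < x →
          ∫⁻ t in Set.Ioo 0 x, v t ≤ ∫⁻ t in Set.Ioo 0 x, rearr (volI a) (gg a w v) t) ∧
        ∫⁻ t in Iset a,
              phiE φ (rearr (volI a) (gg a w v) t / ENNReal.ofReal (w t)) * ENNReal.ofReal (w t) ≤
        ∫⁻ t in Iset a, phiE φ (kk a w v t) * wE w t := by
  have hm : ∀ x : ℝ, MeasurableSet (Ioo 0 x ∩ Iset a) := fun x => measurableSet_Ioo.inter (measurableSet_Iset a)
  refine ⟨C.gg_meas, fun x hx => ?_, fun x hx => ?_, ?_⟩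
  · rw [gg_cut]
    refine ne_top_of_le_ne_top (C.major hv0 hx).2 (setLIntegral_mono' (hm x) fun t ht => C.gg_le ht.2)
  · rw [gg_cut]
    refine (C.major hv0 hx).1.trans (lintegral_mono_ae ?_)
    exact ae_restrict_of_ae_restrict_of_subset inter_subset_right C.gg_ge
  · refine setLIntegral_mono' (measurableSet_Iset a) fun t ht => ?_
    refine mul_le_mul_left (phiE_mono hc h0 hp ?_) _
    have : wE w t ≠ 0 := by simpa [wE] using C.wpos t ht
    exact (ENNReal.div_le_iff this ENNReal.ofReal_ne_top).2 (C.gg_le ht)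

end HL

namespace HL
open scoped Topology


variable {a : ℝ≥0∞} {w : ℝ → ℝ} {v : ℝ → ℝ≥0∞} {φ : ℝ → ℝ}

/-- existence of a monotone nonnegative subgradient selection -/
lemma subgrad (hc : ConvexOn ℝ (Set.Ici 0) φ) (h0 : φ 0 = 0) (hp : ∀ t : ℝ, 0 < t → 0 < φ t) :
    ∃ q : ℝ → ℝ, (∀ x, 0 < x → 0 ≤ q x) ∧ (∀ x y, 0 < x → x ≤ y → q x ≤ q y) ∧
      ∀ x y, 0 < x → 0 ≤ y → φ x + q x * y ≤ φ y + q x * x := by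
  have hi : ∀ x : ℝ, 0 < x → x ∈ interior (Ici (0:ℝ)) := fun x hx => by rw [interior_Ici]; exact hx
  have key : ∀ x y, 0 < x → 0 ≤ y → φ x + derivWithin φ (Ioi x) x * y ≤ φ y + derivWithin φ (Ioi x) x * x := by
    intro x y hx hy
    rcases lt_trichotomy x y with h | h | h
    · have := hc.rightDeriv_le_slope_of_mem_interior (hi x hx) hy h
      rw [slope_def_field, le_div_iff₀ (by linarith)] at this
      linarith
    · rw [h]
    · have := (hc.slope_le_leftDeriv_of_mem_interior hy (hi x hx) h).trans
        (hc.leftDeriv_le_rightDeriv_of_mem_interior (hi x hx))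
      rw [slope_def_field, div_le_iff₀ (by linarith)] at this
      linarith
  refine ⟨fun x => derivWithin φ (Ioi x) x, fun x hx => ?_, fun x y hx hxy => ?_, key⟩
  · have := key x 0 hx le_rfl
    rw [h0] at this
    have h2 := hp x hx
    by_contra hn
    have := mul_neg_of_neg_of_pos (not_le.1 hn) hx
    linarith
  · exact hc.monotoneOn_rightDeriv (hi x hx) (hi y (hx.trans_le hxy)) hxy

lemma lower_le {G : ℝ → ℝ≥0∞} (hG : ∀ x : ℝ, 0 < x → ∫⁻ t in Ioo 0 x, v t ≤ ∫⁻ t in Ioo 0 x, G t)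
    {S : Set ℝ} (h0 : ∀ x ∈ S, 0 < x) (hl : ∀ x ∈ S, ∀ y, 0 < y → y ≤ x → y ∈ S) :
    ∫⁻ t in S, v t ≤ ∫⁻ t in S, G t := by
  rcases S.eq_empty_or_nonempty with he | ⟨x0, hx0⟩
  · rw [he]; simp
  by_cases hb : BddAbove S
  · have hpos : 0 < sSup S := (h0 x0 hx0).trans_le (le_csSup hb hx0)
    have e : S =ᵐ[volume] Ioo 0 (sSup S) := by
      have h1 : Ioo 0 (sSup S) ⊆ S := by
        intro y hy
        obtain ⟨z, hz, hyz⟩ := exists_lt_of_lt_csSup ⟨x0, hx0⟩ hy.2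
        exact hl z hz y hy.1 hyz.le
      have h2 : S ⊆ Ioc 0 (sSup S) := fun y hy => ⟨h0 y hy, le_csSup hb hy⟩
      have h3 : Ioc 0 (sSup S) =ᵐ[volume] Ioo 0 (sSup S) := Ioo_ae_eq_Ioc.symm
      exact (h2.eventuallyLE.trans h3.le).antisymm h1.eventuallyLE
    rw [setLIntegral_congr e, setLIntegral_congr e]
    exact hG _ hpos
  · have e : S = Iset ∞ := by
      rw [Iset_top]
      refine Subset.antisymm h0 fun y hy => ?_
      rw [not_bddAbove_iff] at hb
      obtain ⟨z, hz, hyz⟩ := hb y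
      exact hl z hz y hy hyz.le
    rw [e]
    change II v ∞ ≤ II G ∞
    rw [II_iSup, II_iSup]
    refine iSup_mono fun n => ?_
    rw [II_ofReal, II_ofReal]
    rcases Nat.eq_zero_or_pos n with h | h
    · subst h; simp
    · exact hG n (by exact_mod_cast h)

lemma Ctx.layer (C : Ctx a w v) {G : ℝ → ℝ≥0∞} (hGm : Measurable G)
    (hG : ∀ x : ℝ, 0 < x → ∫⁻ t in Ioo 0 x, v t ≤ ∫⁻ t in Ioo 0 x, G t)
    {P : ℝ≥0∞ → ℝ} (hP0 : ∀ x, 0 ≤ P x) (hP : Monotone P) :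
    ∫⁻ t in Iset a, ENNReal.ofReal (P (kk a w v t)) * (kk a w v t * wE w t) ≤
    ∫⁻ t in Iset a, ENNReal.ofReal (P (kk a w v t)) * G t := by
  have hanti : Antitone (fun t => P (kk a w v t)) := fun s t h => hP (kk_anti h)
  have hpm : Measurable (fun t => P (kk a w v t)) := hanti.measurable
  have lc : ∀ X : ℝ → ℝ≥0∞, Measurable X →
      ∫⁻ t in Iset a, ENNReal.ofReal (P (kk a w v t)) * X t =
      ∫⁻ s in Ioi 0, ∫⁻ t in {t | s < P (kk a w v t)} ∩ Iset a, X t := by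
    intro X hX
    have h1 := lintegral_withDensity_eq_lintegral_mul (volume.restrict (Iset a)) hX hpm.ennreal_ofReal
    have h2 := lintegral_eq_lintegral_meas_lt ((volume.restrict (Iset a)).withDensity X)
      (f := fun t => P (kk a w v t)) (Eventually.of_forall fun t => hP0 _) hpm.aemeasurable
    have h3 : ∫⁻ t in Iset a, ENNReal.ofReal (P (kk a w v t)) * X t =
        ∫⁻ t in Iset a, (X * fun t => ENNReal.ofReal (P (kk a w v t))) t :=
      lintegral_congr fun t => by simp [mul_comm]
    rw [h3, ← h1, h2]
    refine lintegral_congr fun s => ?_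
    have hm : MeasurableSet {t | s < P (kk a w v t)} := measurableSet_lt measurable_const hpm
    rw [withDensity_apply _ hm, Measure.restrict_restrict hm]
  rw [lc (fun t => kk a w v t * wE w t) (kk_anti.measurable.mul C.wEmeas), lc _ hGm]
  refine lintegral_mono fun s => ?_
  have hm : MeasurableSet ({t | s < P (kk a w v t)} ∩ Iset a) :=
    (measurableSet_lt measurable_const hpm).inter (measurableSet_Iset a)
  rw [C.sat hm inter_subset_right]
  · refine lower_le hG (fun x hx => hx.2.1) fun x hx y hy hyx => ⟨?_, hy, ?_⟩
    · exact lt_of_lt_of_le hx.1 (hanti hyx)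
    · exact (ENNReal.ofReal_le_ofReal hyx).trans_lt hx.2.2
  · intro α β hmax
    by_cases hs : s < P (RR w v α β)
    · left
      intro t ht
      refine ⟨?_, hmax.1.1.trans_lt ht.1, ht.2.trans_le hmax.1.2.2.1⟩
      rw [mem_ofPred_eq, C.K1 hmax ht.1 ht.2]; exact hs
    · right
      rw [Set.disjoint_left]
      rintro t ht ⟨h1, _⟩
      rw [mem_ofPred_eq, C.K1 hmax ht.1 ht.2] at h1
      exact hs h1

lemma Ctx.lower2 (C : Ctx a w v) (hc : ConvexOn ℝ (Set.Ici 0) φ) (h0 : φ 0 = 0)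
    (hp : ∀ t : ℝ, 0 < t → 0 < φ t) {G : ℝ → ℝ≥0∞} (hGm : Measurable G)
    (hG : ∀ x : ℝ, 0 < x → ∫⁻ t in Ioo 0 x, v t ≤ ∫⁻ t in Ioo 0 x, G t)
    (hfin : ∀ ε : ℝ≥0∞, 0 < ε → ∫⁻ t in Iset a ∩ {t | ε < kk a w v t}, wE w t ≠ ∞)
    {ε N : ℝ≥0∞} (hε : 0 < ε) (hεt : ε ≠ ∞) (hN : 0 < N) (hNt : N ≠ ∞) :
    ∫⁻ t in Iset a, (if ε < kk a w v t then phiE φ (min (kk a w v t) N) else 0) * wE w t ≤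
    ∫⁻ t in Iset a, phiE φ (G t / wE w t) * wE w t := by
  obtain ⟨q, q0, qm, qt⟩ := subgrad hc h0 hp
  have hpm := phiE_mono hc h0 hp
  set k := kk a w v with hk
  have hkm : Measurable k := kk_anti.measurable
  set P : ℝ≥0∞ → ℝ := fun x => if ε < x then q (min x N).toReal else 0 with hPdef
  have hmin : ∀ x, ε < x → 0 < (min x N).toReal := fun x hx =>
    ENNReal.toReal_pos (lt_min (hε.trans hx) hN).ne' (ne_top_of_le_ne_top hNt (min_le_right _ _))
  have hP0 : ∀ x, 0 ≤ P x := by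
    intro x
    simp only [hPdef]; split_ifs with h
    · exact q0 _ (hmin x h)
    · exact le_rfl
  have hPm : Monotone P := by
    intro x y hxy
    by_cases h : ε < x
    · simp only [hPdef, if_pos h, if_pos (h.trans_le hxy)]
      exact qm _ _ (hmin x h) (ENNReal.toReal_mono (ne_top_of_le_ne_top hNt (min_le_right _ _)) (min_le_min_right _ hxy))
    · simp only [hPdef, if_neg h]; exact hP0 y
  have hl := C.layer hGm hG hP0 hPm
  have hPk : Measurable fun t => ENNReal.ofReal (P (k t)) := (hPm.measurable.comp hkm).ennreal_ofReal
  -- finite middle term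
  have hD : ∫⁻ t in Iset a, ENNReal.ofReal (P (k t)) * (min (k t) N * wE w t) ≠ ∞ := by
    have hb : ∀ t, ENNReal.ofReal (P (k t)) * (min (k t) N * wE w t) ≤
        {t | ε < k t}.indicator (fun t => ENNReal.ofReal (q N.toReal) * N * wE w t) t := by
      intro t
      by_cases h : ε < k t
      · rw [indicator_of_mem (show t ∈ {t | ε < k t} from h), mul_assoc]
        refine mul_le_mul' (ENNReal.ofReal_le_ofReal ?_) (mul_le_mul' (min_le_right _ _) le_rfl)
        simp only [hPdef, if_pos h]
        exact qm _ _ (hmin _ h) (ENNReal.toReal_mono hNt (min_le_right _ _))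
      · simp only [hPdef, if_neg h]; simp
    refine ne_top_of_le_ne_top ?_ (lintegral_mono hb)
    have hms : MeasurableSet {t | ε < k t} := measurableSet_lt measurable_const hkm
    rw [lintegral_indicator hms, lintegral_const_mul _ C.wEmeas, Measure.restrict_restrict hms, inter_comm]
    exact ENNReal.mul_ne_top (ENNReal.mul_ne_top ENNReal.ofReal_ne_top hNt) (hfin ε hε)
  have hm1 : Measurable fun t => (if ε < k t then phiE φ (min (k t) N) else 0) * wE w t := by
    refine Measurable.mul (Measurable.ite (measurableSet_lt measurable_const hkm) ?_ measurable_const) C.wEmeas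
    exact hpm.measurable.comp (hkm.min measurable_const)
  have hm3 : Measurable fun t => phiE φ (G t / wE w t) * wE w t :=
    (hpm.measurable.comp (hGm.div C.wEmeas)).mul C.wEmeas
  have hpt : ∀ t ∈ Iset a, (if ε < k t then phiE φ (min (k t) N) else 0) * wE w t +
      ENNReal.ofReal (P (k t)) * G t ≤ phiE φ (G t / wE w t) * wE w t +
      ENNReal.ofReal (P (k t)) * (min (k t) N * wE w t) := by
    intro t ht
    have hw0 : wE w t ≠ 0 := by simpa [wE] using C.wpos t ht
    have hwt : wE w t ≠ ∞ := ENNReal.ofReal_ne_top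
    by_cases h : ε < k t
    · by_cases hy : G t / wE w t = ∞
      · rw [hy]; simp [phiE, ENNReal.top_mul hw0]
      · have hGe : G t = G t / wE w t * wE w t := (ENNReal.div_mul_cancel hw0 hwt).symm
        have hmt : min (k t) N ≠ ∞ := ne_top_of_le_ne_top hNt (min_le_right _ _)
        rw [if_pos h]
        conv_lhs => rw [hGe]
        rw [← mul_assoc, ← mul_assoc, ← add_mul, ← add_mul]
        refine mul_le_mul' ?_ le_rfl
        generalize G t / wE w t = y at hy
        simp only [phiE, if_neg hy, if_neg hmt, hPdef, if_pos h]
        have hz := hmin _ h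
        have hq := q0 _ hz
        have hphi0 : ∀ x : ℝ, 0 ≤ x → 0 ≤ φ x := fun x hx => by
          rcases hx.eq_or_lt with h | h
          · rw [← h, h0]
          · exact (hp x h).le
        generalize min (k t) N = z at hz hq hmt ⊢
        conv_lhs => rw [← ENNReal.ofReal_toReal hy]
        conv_rhs => rw [← ENNReal.ofReal_toReal hmt]
        rw [ENNReal.toReal_ofReal ENNReal.toReal_nonneg, ← ENNReal.ofReal_mul hq, ← ENNReal.ofReal_mul hq, ← ENNReal.ofReal_add (hphi0 _ ENNReal.toReal_nonneg) (mul_nonneg hq ENNReal.toReal_nonneg),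
          ← ENNReal.ofReal_add (hphi0 _ ENNReal.toReal_nonneg) (mul_nonneg hq ENNReal.toReal_nonneg)]
        exact ENNReal.ofReal_le_ofReal (qt _ _ hz ENNReal.toReal_nonneg)
    · simp only [hPdef, if_neg h]; simp
  have hint := setLIntegral_mono' (μ := volume) (measurableSet_Iset a) hpt
  rw [lintegral_add_left hm1, lintegral_add_left hm3] at hint
  have h3 : ∫⁻ t in Iset a, ENNReal.ofReal (P (k t)) * (min (k t) N * wE w t) ≤
      ∫⁻ t in Iset a, ENNReal.ofReal (P (k t)) * G t := by
    refine le_trans (lintegral_mono fun t => ?_) hl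
    exact mul_le_mul' le_rfl (mul_le_mul' (min_le_left _ _) le_rfl)
  have h4 := (add_le_add le_rfl h3).trans hint
  exact (ENNReal.add_le_add_iff_right hD).1 h4

lemma Ctx.lower_b (C : Ctx a w v) (hc : ConvexOn ℝ (Set.Ici 0) φ) (h0 : φ 0 = 0)
    (hp : ∀ t : ℝ, 0 < t → 0 < φ t) {G : ℝ → ℝ≥0∞} (hGm : Measurable G)
    (hG : ∀ x : ℝ, 0 < x → ∫⁻ t in Ioo 0 x, v t ≤ ∫⁻ t in Ioo 0 x, G t)
    (hfin : ∀ ε : ℝ≥0∞, 0 < ε → ∫⁻ t in Iset a ∩ {t | ε < kk a w v t}, wE w t ≠ ∞) :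
    ∫⁻ t in Iset a, phiE φ (kk a w v t) * wE w t ≤
    ∫⁻ t in Iset a, phiE φ (G t / wE w t) * wE w t := by
  have hpm := phiE_mono hc h0 hp
  set k := kk a w v with hk
  have hkm : Measurable k := kk_anti.measurable
  set F : ℕ → ℝ → ℝ≥0∞ := fun n t =>
    (if ((n:ℝ≥0∞) + 1)⁻¹ < k t then phiE φ (min (k t) ((n:ℝ≥0∞) + 1)) else 0) * wE w t with hF
  have hFm : ∀ n, Measurable (F n) := fun n => by
    refine Measurable.mul (Measurable.ite (measurableSet_lt measurable_const hkm) ?_ measurable_const) C.wEmeas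
    exact hpm.measurable.comp (hkm.min measurable_const)
  have hFmono : Monotone F := by
    intro n m hnm t
    have hnm' : (n:ℝ≥0∞) + 1 ≤ (m:ℝ≥0∞) + 1 := by gcongr
    refine mul_le_mul' ?_ le_rfl
    by_cases h : ((n:ℝ≥0∞) + 1)⁻¹ < k t
    · rw [if_pos h, if_pos ((ENNReal.inv_le_inv.2 hnm').trans_lt h)]
      exact hpm (min_le_min_left _ hnm')
    · rw [if_neg h]; exact zero_le
  have h1 : ∫⁻ t in Iset a, phiE φ (k t) * wE w t ≤ ∫⁻ t in Iset a, ⨆ n, F n t := by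
    refine setLIntegral_mono' (measurableSet_Iset a) fun t ht => ?_
    have hkt : k t ≠ ∞ := C.kk_fin ht
    by_cases hk0 : k t = 0
    · rw [hk0]; simp [phiE, h0]
    · obtain ⟨n1, hn1⟩ := ENNReal.exists_inv_nat_lt hk0
      obtain ⟨n2, hn2⟩ := ENNReal.exists_nat_gt hkt
      refine le_iSup_of_le (max n1 n2) ?_
      have e1 : (((max n1 n2 : ℕ):ℝ≥0∞) + 1)⁻¹ < k t := by
        refine lt_of_le_of_lt (ENNReal.inv_le_inv.2 ?_) hn1
        exact le_trans (by exact_mod_cast le_max_left n1 n2) le_self_add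
      have e2 : k t ≤ ((max n1 n2 : ℕ):ℝ≥0∞) + 1 :=
        hn2.le.trans (le_trans (by exact_mod_cast le_max_right n1 n2) le_self_add)
      simp only [hF]
      rw [if_pos e1, min_eq_left e2]
  refine h1.trans ?_
  rw [lintegral_iSup hFm hFmono]
  refine iSup_le fun n => ?_
  refine C.lower2 hc h0 hp hGm hG hfin (ε := ((n:ℝ≥0∞) + 1)⁻¹) (N := (n:ℝ≥0∞) + 1) ?_ ?_ ?_ ?_
  · simp
  · simp
  · simp
  · simp

lemma phi_lin (hc : ConvexOn ℝ (Set.Ici 0) φ) (h0 : φ 0 = 0) (hp : ∀ t : ℝ, 0 < t → 0 < φ t)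
    {r : ℝ} (hr : 0 < r) (y : ℝ≥0∞) :
    ENNReal.ofReal (φ r / r) * y ≤ phiE φ y + ENNReal.ofReal (φ r / r) * ENNReal.ofReal r := by
  have hc0 : 0 ≤ φ r / r := (div_pos (hp r hr) hr).le
  by_cases hy : y = ∞
  · simp [phiE, hy]
  rcases le_total y.toReal r with h | h
  · refine le_trans (mul_le_mul' le_rfl ?_) le_add_self
    rw [← ENNReal.ofReal_toReal hy]; exact ENNReal.ofReal_le_ofReal h
  · refine le_trans ?_ le_self_add
    rw [phiE, if_neg hy]
    have hy0 : 0 < y.toReal := hr.trans_le h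
    conv_lhs => rw [← ENNReal.ofReal_toReal hy]
    rw [← ENNReal.ofReal_mul hc0]
    refine ENNReal.ofReal_le_ofReal ?_
    have h1' : r / y.toReal ≤ 1 := by rw [div_le_one hy0]; exact h
    have := hc.2 (show (0:ℝ) ∈ Ici (0:ℝ) from self_mem_Ici) (show y.toReal ∈ Ici (0:ℝ) from hy0.le)
      (show (0:ℝ) ≤ 1 - r / y.toReal by linarith) (show (0:ℝ) ≤ r / y.toReal by positivity) (by ring)
    simp only [smul_eq_mul, mul_zero, zero_add, h0, div_mul_cancel₀ _ hy0.ne'] at this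
    rw [div_mul_eq_mul_div, div_le_iff₀ hr]
    have h2 := mul_le_mul_of_nonneg_right this hy0.le
    have h3 : r / y.toReal * φ y.toReal * y.toReal = r * φ y.toReal := by field_simp
    linarith

lemma Ctx.lower_a (C : Ctx a w v) (hc : ConvexOn ℝ (Set.Ici 0) φ) (h0 : φ 0 = 0)
    (hp : ∀ t : ℝ, 0 < t → 0 < φ t) {G : ℝ → ℝ≥0∞} (hGm : Measurable G)
    (hG : ∀ x : ℝ, 0 < x → ∫⁻ t in Ioo 0 x, v t ≤ ∫⁻ t in Ioo 0 x, G t)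
    (ha : a = ∞) (hI : II (wE w) ∞ = ∞) {r : NNReal} (hr : 0 < r)
    (hfr : ∃ᶠ x : ℝ in atTop, (r:ℝ≥0∞) * II (wE w) (ENNReal.ofReal x) ≤ II v (ENNReal.ofReal x)) :
    ∫⁻ t in Iset a, phiE φ (G t / wE w t) * wE w t = ∞ := by
  by_contra hcf
  set c := ∫⁻ t in Iset a, phiE φ (G t / wE w t) * wE w t with hcdef
  have hr2 : (0:ℝ) < r / 2 := by positivity
  set c0 := ENNReal.ofReal (φ (r/2) / (r/2)) with hc0
  have hc0pos : c0 ≠ 0 := by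
    simp only [hc0, ne_eq, ENNReal.ofReal_eq_zero, not_le]; exact div_pos (hp _ hr2) hr2
  have hc0t : c0 ≠ ∞ := ENNReal.ofReal_ne_top
  set ρ := ENNReal.ofReal ((r:ℝ)/2) with hρ
  have hρ0 : ρ ≠ 0 := by simpa [hρ] using hr
  have hρt : ρ ≠ ∞ := ENNReal.ofReal_ne_top
  have hrr : (r:ℝ≥0∞) = ρ + ρ := by
    rw [hρ, ← ENNReal.ofReal_add hr2.le hr2.le, add_halves, ENNReal.ofReal_coe_nnreal]
  have hpm := phiE_mono hc h0 hp
  have hm3 : Measurable fun t => phiE φ (G t / wE w t) * wE w t :=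
    (hpm.measurable.comp (hGm.div C.wEmeas)).mul C.wEmeas
  have key : ∀ x : ℝ, 0 < x → (r:ℝ≥0∞) * II (wE w) (ENNReal.ofReal x) ≤ II v (ENNReal.ofReal x) →
      c0 * ρ * II (wE w) (ENNReal.ofReal x) ≤ c := by
    intro x hx h
    have hxI : ∀ t ∈ Ioo 0 x, t ∈ Iset a := fun t ht => ⟨ht.1, by rw [ha]; exact ENNReal.ofReal_lt_top⟩
    have h1 : ∀ t ∈ Ioo 0 x, c0 * G t ≤ phiE φ (G t / wE w t) * wE w t + c0 * ρ * wE w t := by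
      intro t ht
      have hw0 : wE w t ≠ 0 := by simpa [wE] using C.wpos t (hxI t ht)
      have := mul_le_mul' (phi_lin hc h0 hp hr2 (G t / wE w t)) (le_refl (wE w t))
      rwa [mul_assoc, ENNReal.div_mul_cancel hw0 ENNReal.ofReal_ne_top, add_mul] at this
    have h2 := setLIntegral_mono' (μ := volume) measurableSet_Ioo h1
    rw [lintegral_const_mul _ hGm, lintegral_add_left hm3, lintegral_const_mul _ C.wEmeas] at h2
    have h3 : ∫⁻ t in Ioo 0 x, phiE φ (G t / wE w t) * wE w t ≤ c := lintegral_mono_set hxI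
    have hWf : II (wE w) (ENNReal.ofReal x) ≠ ∞ := C.wfin x ⟨hx, by rw [ha]; exact ENNReal.ofReal_lt_top⟩
    rw [← II_ofReal (wE w)] at h2
    have h4 : c0 * (r * II (wE w) (ENNReal.ofReal x)) ≤ c + c0 * ρ * II (wE w) (ENNReal.ofReal x) := by
      refine le_trans (mul_le_mul' le_rfl (h.trans ?_)) (h2.trans (add_le_add h3 le_rfl))
      rw [II_ofReal]; exact hG x hx
    have h5 : c0 * (r * II (wE w) (ENNReal.ofReal x)) =
      c0 * ρ * II (wE w) (ENNReal.ofReal x) + c0 * ρ * II (wE w) (ENNReal.ofReal x) := by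
      rw [hrr]; ring
    rw [h5] at h4
    exact (ENNReal.add_le_add_iff_right (ENNReal.mul_ne_top (ENNReal.mul_ne_top hc0t hρt) hWf)).1 h4
  have hd0 : c0 * ρ ≠ 0 := mul_ne_zero hc0pos hρ0
  have hdt : c0 * ρ ≠ ∞ := ENNReal.mul_ne_top hc0t hρt
  have hB : c / (c0 * ρ) < ∞ := ENNReal.div_lt_top hcf hd0
  rw [II_iSup] at hI
  rw [← hI, lt_iSup_iff] at hB
  obtain ⟨n, hn⟩ := hB
  obtain ⟨x, hx, hx1⟩ := (hfr.and_eventually (eventually_gt_atTop (n:ℝ))).exists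
  have h6 := key x ((Nat.cast_nonneg n).trans_lt hx1) hx
  rw [mul_comm, ← ENNReal.le_div_iff_mul_le (Or.inl hd0) (Or.inl hdt)] at h6
  exact absurd (hn.trans_le (II_mono _ (ENNReal.ofReal_le_ofReal hx1.le))) (not_lt.2 h6)

lemma Ctx.lower (C : Ctx a w v) (hc : ConvexOn ℝ (Set.Ici 0) φ) (h0 : φ 0 = 0)
    (hp : ∀ t : ℝ, 0 < t → 0 < φ t) {G : ℝ → ℝ≥0∞} (hGm : Measurable G)
    (hG : ∀ x : ℝ, 0 < x → ∫⁻ t in Ioo 0 x, v t ≤ ∫⁻ t in Ioo 0 x, G t) :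
    ∫⁻ t in Iset a, phiE φ (kk a w v t) * wE w t ≤
    ∫⁻ t in Iset a, phiE φ (G t / wE w t) * wE w t := by
  rcases C.dich with ⟨ha, hI, r, hr, hfr⟩ | h
  · rw [C.lower_a hc h0 hp hGm hG ha hI hr hfr]; exact le_top
  · exact C.lower_b hc h0 hp hGm hG h

end HL

/-- For an Orlicz function `φ` and `f ∈ L₁ + M_W`,
`inf { ∫_I φ(g*/w)·w dm : g* locally integrable, f ≺ g } = ∫_I φ(f⁰/w)·w dm`,
where `f⁰` is the Halperin level function of `f` with respect to `w`:
the modular `Q(f)` equals `M(f⁰)`. -/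
theorem stmt_19 (a : ℝ≥0∞) (ha : 0 < a) (w : ℝ → ℝ)
    (hw_pos : ∀ x ∈ Iset a, 0 < w x) (hw_anti : AntitoneOn w (Iset a)) (hw_meas : Measurable w)
    (hW_fin : ∀ t ∈ Iset a, ∫⁻ s in Set.Ioo 0 t, ENNReal.ofReal (w s) ≠ ∞)
    (φ : ℝ → ℝ) (hφ_conv : ConvexOn ℝ (Set.Ici 0) φ) (hφ_zero : φ 0 = 0)
    (hφ_pos : ∀ t : ℝ, 0 < t → 0 < φ t)
    (f : ℝ → ℝ) (hf : Measurable f)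
    (hL1MW : ∃ u h : ℝ → ℝ, Measurable u ∧ Measurable h ∧
      (∀ᵐ x ∂(volI a), f x = u x + h x) ∧
      (∫⁻ x in Iset a, ENNReal.ofReal |u x|) ≠ ∞ ∧ MWnorm a w h ≠ ∞) :
    sInf {c : ℝ≥0∞ | ∃ g : ℝ → ℝ, Measurable g ∧
        (∀ x : ℝ, 0 < x → ∫⁻ t in Set.Ioo 0 x, rearr (volI a) g t ≠ ∞) ∧
        (∀ x : ℝ, 0 < x →
          ∫⁻ t in Set.Ioo 0 x, rearr (volI a) f t ≤ ∫⁻ t in Set.Ioo 0 x, rearr (volI a) g t) ∧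
        c = ∫⁻ t in Iset a,
              phiE φ (rearr (volI a) g t / ENNReal.ofReal (w t)) * ENNReal.ofReal (w t)}
      = ∫⁻ t in Iset a,
          phiE φ (levelFun a w (rearr (volI a) f) t / ENNReal.ofReal (w t)) *
            ENNReal.ofReal (w t) := by
  have C := HL.mkCtx ha hw_pos hw_anti hw_meas hW_fin f hL1MW
  rw [C.rhs_eq φ]
  apply le_antisymm
  · obtain ⟨h1, h2, h3, h4⟩ := C.upper (fun t ht => HL.rearr_eq_zero ht) hφ_conv hφ_zero hφ_pos
    refine le_trans (sInf_le ?_) h4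
    exact ⟨_, h1, h2, h3, rfl⟩
  · refine le_sInf ?_
    rintro c ⟨g, _, _, h3, rfl⟩
    exact C.lower hφ_conv hφ_zero hφ_pos (HL.rearr_antitone _ g).measurable h3
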